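/- Let Γ be a subgroup of (ℂ*)² of finite rank r (i.e., Γ has a free subgroup Γ₀ of rank r such that every element of Γ has a positive power in Γ₀). Then the number of solutions (x, y) ∈ Γ of the equation x + y = 1 is finite, and is at most 2^{8(r+1)}. -/

import Mathlib

/-!
The units involved generate a ring with a homomorphism to a number field that separates the
solutions, so one may work over a number field and embed pairs of units logarithmically, through
finitely many places, into a real vector space. The heights of the solutions are comparable to the
norms of their images, and the images of the given group span a subspace of dimension at most `r`.

For solutions `x ≠ y` put `t = y / x`. Then `(1, 1, -1)` and `(t.1, t.2, -1)` are two relations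
satisfied by the point `(x.1, x.2, 1)`, and by Cramer's rule and the product formula the height of
`x` is at most that of `t`, up to a constant. Replacing the first relation by the Padé approximants
`A * x.1 ^ (2 * n) + B * x.2 ^ (2 * n) + C = 0`, whose coefficients have degree only `n` in `x`,
bounds `n` times the height of `x` by that of `y / x ^ (2 * n)` in the same way. The approximants
are the residues of `(T - x.2) ^ -p * (T + x.1) ^ -q * T ^ -r`, which sum to zero.

Among solutions with nearly the same direction, the first bound forces the lengths to grow
geometrically, and the second one, with `2 * n` the approximate ratio of two lengths, keeps that
ratio bounded. Hence every small cone contains few large solutions, and sphere packing counts the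
cones. Sphere packing counts the small solutions as well, since few of them are close together:
the 17th powers of an integral relation `a₁ + ⋯ + a₆ = 0` sum to a multiple of 17, which for
determinants of small height has to vanish, and so nearby solutions `(z, 1 - z)` are zeros of one
polynomial of degree 17.
-/

section Packing

open Metric MeasureTheory

variable {α E : Type*} [NormedAddCommGroup E] {s : Finset α} {f : α → E} {R δ : ℝ} {m : ℕ}

theorem sum_indicator_ball_le (hf : ∀ x ∈ s, ‖f x‖ ≤ R)
    (hm : ∀ x ∈ s, {y ∈ s | ‖f y - f x‖ < δ}.card ≤ m) (z : E) :
    ∑ x ∈ s, (ball (f x) (δ / 2)).indicator (1 : E → ENNReal) z ≤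
      (ball (0 : E) (R + δ / 2)).indicator (fun _ => (m : ENNReal)) z := by
  classical
  by_cases hz : ∃ x ∈ s, z ∈ ball (f x) (δ / 2)
  · obtain ⟨x, hx, hzx⟩ := hz
    have hmem : z ∈ ball (0 : E) (R + δ / 2) :=
      ball_subset_ball' (by rw [dist_zero_right]; linarith [hf x hx]) hzx
    have hsum : ∑ y ∈ s, (ball (f y) (δ / 2)).indicator (1 : E → ENNReal) z =
        ({y ∈ s | z ∈ ball (f y) (δ / 2)}.card : ENNReal) := by
      simp [Set.indicator_apply]
    have hsub : {y ∈ s | z ∈ ball (f y) (δ / 2)} ⊆ {y ∈ s | ‖f y - f x‖ < δ} := by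
      refine Finset.monotone_filter_right s fun y _ hzy => ?_
      rw [← dist_eq_norm]
      have := dist_triangle_right (f y) (f x) z
      rw [mem_ball'] at hzx hzy
      linarith
    rw [Set.indicator_of_mem hmem, hsum]
    exact_mod_cast (Finset.card_le_card hsub).trans (hm x hx)
  · push Not at hz
    rw [Finset.sum_eq_zero fun x hx => Set.indicator_of_notMem (hz x hx) _]
    exact zero_le

theorem card_le_mul_pow_finrank [NormedSpace ℝ E] [FiniteDimensional ℝ E] (hR : 0 ≤ R)
    (hδ : 0 < δ) (hf : ∀ x ∈ s, ‖f x‖ ≤ R)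
    (hm : ∀ x ∈ s, {y ∈ s | ‖f y - f x‖ < δ}.card ≤ m) :
    (s.card : ℝ) ≤ m * (1 + 2 * R / δ) ^ Module.finrank ℝ E := by
  borelize E
  let μ : Measure E := Measure.addHaar
  have hvol : s.card * (ENNReal.ofReal ((δ / 2) ^ Module.finrank ℝ E) * μ (ball 0 1)) ≤
      m * (ENNReal.ofReal ((R + δ / 2) ^ Module.finrank ℝ E) * μ (ball 0 1)) := by
    have h := lintegral_mono (μ := μ) (sum_indicator_ball_le hf hm)
    rw [lintegral_finsetSum _ fun x _ => measurable_one.indicator measurableSet_ball,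
      lintegral_indicator_const measurableSet_ball] at h
    simpa only [lintegral_indicator_one measurableSet_ball, Measure.addHaar_ball_of_pos μ _
      (show 0 < δ / 2 by positivity), Measure.addHaar_ball_of_pos μ _
      (show 0 < R + δ / 2 by positivity), Finset.sum_const, nsmul_eq_mul] using h
  rw [← mul_assoc, ← mul_assoc, ENNReal.mul_le_mul_iff_left (measure_ball_pos μ 0 one_pos).ne'
    measure_ball_lt_top.ne, ← ENNReal.ofReal_natCast, ← ENNReal.ofReal_natCast,
    ← ENNReal.ofReal_mul (by positivity), ← ENNReal.ofReal_mul (by positivity),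
    ENNReal.ofReal_le_ofReal_iff (by positivity),
    show R + δ / 2 = (δ / 2) * (1 + 2 * R / δ) by field_simp; ring, mul_pow, mul_left_comm,
    mul_comm] at hvol
  exact le_of_mul_le_mul_left hvol (by positivity)

end Packing

theorem card_le_of_geometric_gap {α : Type*} {s : Finset α} {N : α → ℝ} {A c : ℝ} {k : ℕ}
    (hA : 0 < A) (hc : 1 < c) (hle : ∀ x ∈ s, A ≤ N x) (hlt : ∀ x ∈ s, N x < c ^ k * A)
    (hgap : ∀ x ∈ s, ∀ y ∈ s, x ≠ y → N x ≤ N y → c * N x ≤ N y) : s.card ≤ k := by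
  have hc₀ : 0 < c := one_pos.trans hc
  have hone : ∀ x ∈ s, 1 ≤ N x / A := fun x hx => (one_le_div hA).2 (hle x hx)
  let e : α → ℕ := fun x => ⌊Real.logb c (N x / A)⌋₊
  have he_lt : ∀ x ∈ s, ∀ y ∈ s, x ≠ y → N x ≤ N y → e x < e y := by
    intro x hx y hy hne hxy
    have hx₀ : 0 < N x / A := one_pos.trans_le (hone x hx)
    have hstep : c * (N x / A) ≤ N y / A := by
      rw [← mul_div_assoc]; gcongr; exact hgap x hx y hy hne hxy
    have hlog := Real.logb_le_logb_of_le hc (by positivity) hstep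
    rw [Real.logb_mul hc₀.ne' hx₀.ne', Real.logb_self_eq_one hc] at hlog
    rw [Nat.lt_iff_add_one_le, ← Nat.floor_add_one (Real.logb_nonneg hc (hone x hx))]
    exact Nat.floor_mono (by linarith)
  have he_mem : Set.MapsTo e s (Finset.range k) := by
    intro x hx
    have hx₀ : 0 < N x / A := one_pos.trans_le (hone x hx)
    rw [Finset.mem_coe, Finset.mem_range, Nat.floor_lt (Real.logb_nonneg hc (hone x hx)),
      Real.logb_lt_iff_lt_rpow hc hx₀, Real.rpow_natCast, div_lt_iff₀ hA]
    exact hlt x hx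
  have he_inj : Set.InjOn e s := by
    intro x hx y hy hxy
    by_contra hne
    rcases le_total (N x) (N y) with h | h
    · exact (he_lt x hx y hy hne h).ne hxy
    · exact (he_lt y hy x hx (Ne.symm hne) h).ne' hxy
  simpa using Finset.card_le_card_of_injOn e he_mem he_inj

section GapPrinciples

open NormedSpace

variable {α E : Type*} [NormedAddCommGroup E] [NormedSpace ℝ E]

theorem norm_sub_smul_le (y z : E) (c : ℝ) :
    ‖z - c • y‖ ≤ ‖z‖ * ‖normalize z - normalize y‖ + |‖z‖ - c * ‖y‖| := by
  have hsplit : z - c • y =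
      ‖z‖ • (normalize z - normalize y) + (‖z‖ - c * ‖y‖) • normalize y := by
    rw [smul_sub, sub_smul, mul_smul, norm_smul_normalize, norm_smul_normalize]; abel
  have hnorm : ‖normalize y‖ ≤ 1 := by
    rcases eq_or_ne y 0 with rfl | hy
    · simp
    · rw [norm_normalize_eq_one_iff.2 hy]
  rw [hsplit]
  refine (norm_add_le _ _).trans ?_
  rw [norm_smul, norm_smul, norm_norm, Real.norm_eq_abs]
  gcongr
  exact mul_le_of_le_one_right (abs_nonneg _) hnorm

theorem five_div_four_mul_norm_le {y z : E} (hy : 5 ≤ ‖y‖) (hyz : ‖y‖ ≤ ‖z‖)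
    (hdir : ‖normalize z - normalize y‖ ≤ 1 / 50)
    (hgap : ‖y‖ ≤ 2 * ‖z - y‖ + 3 * Real.log 2) : 5 / 4 * ‖y‖ ≤ ‖z‖ := by
  have hdist := norm_sub_smul_le y z 1
  rw [one_smul, one_mul, abs_of_nonneg (by linarith)] at hdist
  nlinarith [Real.log_two_lt_d9]

theorem norm_le_thirty_mul_norm {y z : E} (hy : 17 ≤ ‖y‖)
    (hdir : ‖normalize z - normalize y‖ ≤ 1 / 50)
    (hpade : ∀ n : ℕ, 0 < n →
      n * ‖y‖ ≤ 2 * ‖z - (2 * n : ℝ) • y‖ + 3 * n * Real.log 32) : ‖z‖ ≤ 30 * ‖y‖ := by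
  by_contra! hlt
  -- With `2n‖y‖` just below `‖z‖`, the right side of `hpade` is too small.
  obtain ⟨n, hn_le, hn_lt⟩ : ∃ n : ℕ, n * (‖y‖ * 2) ≤ ‖z‖ ∧ ‖z‖ < (n + 1) * (‖y‖ * 2) := by
    have hy₂ : 0 < ‖y‖ * 2 := by linarith
    exact ⟨⌊‖z‖ / (‖y‖ * 2)⌋₊, (le_div_iff₀ hy₂).1 (Nat.floor_le (by positivity)),
      (div_lt_iff₀ hy₂).1 (Nat.lt_floor_add_one _)⟩
  have hn14 : (14 : ℝ) < n := by
    by_contra! h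
    nlinarith
  have hbound := hpade n (by exact_mod_cast (by norm_num : (0 : ℝ) < 14).trans hn14)
  have hdist := norm_sub_smul_le y z (2 * n)
  rw [abs_of_nonneg (by linarith)] at hdist
  have hlog32 : Real.log 32 = 5 * Real.log 2 := by
    rw [show (32 : ℝ) = 2 ^ 5 by norm_num, Real.log_pow]; norm_num
  nlinarith [Real.log_two_lt_d9]

/-- The two ways in which vectors pointing in almost the same direction repel each other: `gap`
keeps them apart, `pade` bounds the ratio of their lengths. -/
structure HasGapPrinciples (s : Finset α) (f : α → E) : Prop where
  gap : ∀ x ∈ s, ∀ y ∈ s, x ≠ y → ‖f x‖ ≤ 2 * ‖f y - f x‖ + 3 * Real.log 2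
  pade : ∀ x ∈ s, ∀ y ∈ s, ∀ n : ℕ, 0 < n →
    n * ‖f x‖ ≤ 2 * ‖f y - (2 * n : ℝ) • f x‖ + 3 * n * Real.log 32

namespace HasGapPrinciples

variable {s t : Finset α} {f : α → E}

theorem mono (h : HasGapPrinciples s f) (hts : t ⊆ s) : HasGapPrinciples t f where
  gap x hx y hy := h.gap x (hts hx) y (hts hy)
  pade x hx y hy := h.pade x (hts hx) y (hts hy)

theorem card_le_twenty (h : HasGapPrinciples s f) {A : ℝ} (hA : 5 ≤ A)
    (hle : ∀ x ∈ s, A ≤ ‖f x‖) (hlt : ∀ x ∈ s, ‖f x‖ < (5 / 4) ^ 20 * A)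
    (hdir : ∀ x ∈ s, ∀ y ∈ s, ‖normalize (f y) - normalize (f x)‖ ≤ 1 / 50) :
    s.card ≤ 20 :=
  card_le_of_geometric_gap (N := fun x => ‖f x‖) (by linarith) (by norm_num) hle hlt
    fun x hx y hy hne hxy => five_div_four_mul_norm_le (hA.trans (hle x hx)) hxy
      (hdir x hx y hy) (h.gap x hx y hy hne)

theorem card_le_forty (h : HasGapPrinciples s f) (hlarge : ∀ x ∈ s, 5 ≤ ‖f x‖)
    (hdir : ∀ x ∈ s, ∀ y ∈ s, ‖normalize (f y) - normalize (f x)‖ ≤ 1 / 50) :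
    s.card ≤ 40 := by
  have hshort : {x ∈ s | ‖f x‖ ≤ 17}.card ≤ 20 := by
    refine (h.mono (Finset.filter_subset _ _)).card_le_twenty le_rfl ?_ ?_ ?_ <;>
      simp only [Finset.mem_filter]
    · exact fun x hx => hlarge x hx.1
    · exact fun x hx => hx.2.trans_lt (by norm_num)
    · exact fun x hx y hy => hdir x hx.1 y hy.1
  have hlong : {x ∈ s | ¬ ‖f x‖ ≤ 17}.card ≤ 20 := by
    rcases {x ∈ s | ¬ ‖f x‖ ≤ 17}.eq_empty_or_nonempty with hempty | hne
    · rw [hempty]; exact Nat.zero_le _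
    obtain ⟨y, hy, hmin⟩ := Finset.exists_min_image _ (fun x => ‖f x‖) hne
    simp only [Finset.mem_filter, not_le] at hy hmin
    refine (h.mono (Finset.filter_subset _ _)).card_le_twenty (by linarith) (A := ‖f y‖)
      ?_ ?_ ?_ <;> simp only [Finset.mem_filter, not_le]
    · exact hmin
    · intro x hx
      have := norm_le_thirty_mul_norm hy.2.le (hdir y hy.1 x hx.1) (h.pade y hy.1 x hx.1)
      norm_num
      linarith
    · exact fun x hx y hy => hdir x hx.1 y hy.1
  have := Finset.card_filter_add_card_filter_not (s := s) (fun x => ‖f x‖ ≤ 17)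
  omega

theorem card_le_mul_pow_of_five_le [FiniteDimensional ℝ E] (h : HasGapPrinciples s f)
    (hlarge : ∀ x ∈ s, 5 ≤ ‖f x‖) : (s.card : ℝ) ≤ 40 * 201 ^ Module.finrank ℝ E := by
  have hunit : ∀ x ∈ s, ‖normalize (f x)‖ ≤ 1 := by
    intro x hx
    rw [norm_normalize_eq_one_iff.2 (norm_pos_iff.1 (by linarith [hlarge x hx]))]
  have := card_le_mul_pow_finrank (δ := 1 / 100) (m := 40) zero_le_one (by norm_num) hunit
    fun x _ => by
      refine (h.mono (Finset.filter_subset _ _)).card_le_forty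
        (fun y hy => hlarge y (Finset.mem_filter.1 hy).1) fun y hy z hz => ?_
      have hyz := norm_sub_le_norm_sub_add_norm_sub (normalize (f z)) (normalize (f x))
        (normalize (f y))
      rw [norm_sub_rev (normalize (f x))] at hyz
      linarith [(Finset.mem_filter.1 hy).2, (Finset.mem_filter.1 hz).2]
  norm_num at this
  exact this

theorem card_le [FiniteDimensional ℝ E] (h : HasGapPrinciples s f)
    (hsmall : ∀ x ∈ s, {y ∈ s | ‖f y - f x‖ < 9 / 200}.card ≤ 17) :
    s.card ≤ 2 ^ (8 * (Module.finrank ℝ E + 1)) := by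
  set k := Module.finrank ℝ E
  have hshort : ({x ∈ s | ‖f x‖ ≤ 5}.card : ℝ) ≤ (17 : ℕ) * (1 + 2 * 5 / (9 / 200)) ^ k := by
    refine card_le_mul_pow_finrank (by norm_num) (by norm_num)
      (fun x hx => (Finset.mem_filter.1 hx).2) fun x hx => ?_
    refine (Finset.card_le_card ?_).trans (hsmall x (Finset.mem_filter.1 hx).1)
    exact Finset.filter_subset_filter _ (Finset.filter_subset _ _)
  have hlong : ({x ∈ s | ¬ ‖f x‖ ≤ 5}.card : ℝ) ≤ 40 * 201 ^ k :=
    (h.mono (Finset.filter_subset _ _)).card_le_mul_pow_of_five_le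
      fun x hx => (not_le.1 (Finset.mem_filter.1 hx).2).le
  have hbound : (s.card : ℝ) ≤ 2 ^ (8 * (k + 1)) := by
    rw [← Finset.card_filter_add_card_filter_not (fun x => ‖f x‖ ≤ 5)]
    push_cast at hshort ⊢
    calc _ ≤ 17 * (1 + 2 * 5 / (9 / 200)) ^ k + 40 * 201 ^ k := add_le_add hshort hlong
      _ ≤ 17 * 256 ^ k + 40 * 256 ^ k := by gcongr <;> norm_num
      _ ≤ 256 * 256 ^ k := by linarith [pow_pos (by norm_num : (0 : ℝ) < 256) k]
      _ = 2 ^ (8 * (k + 1)) := by rw [pow_mul, pow_succ]; norm_num [mul_comm]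
  exact_mod_cast hbound

end HasGapPrinciples

end GapPrinciples

section ThreePoles

open PowerSeries

variable {K : Type*} [Field K]

/-- The residue at `T = 0` of `T⁻ᵖ (T + u)⁻ᵠ (T + w)⁻ʳ`. The factor `X` shifts the coefficient
`p - 1` to `p`, so that no subtraction is needed. -/
noncomputable def tripleResidue (p q r : ℕ) (u w : K) : K :=
  coeff p (X * ((C u + X)⁻¹ ^ q * (C w + X)⁻¹ ^ r))

theorem C_add_X_mul_inv {u : K} (hu : u ≠ 0) : (C u + X : K⟦X⟧) * (C u + X)⁻¹ = 1 :=
  PowerSeries.mul_inv_cancel _ (by simpa using hu)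

theorem derivative_C_add_X_inv_pow (u : K) (m : ℕ) :
    derivative K ((C u + X : K⟦X⟧)⁻¹ ^ m) = -(C (m : K) * (C u + X)⁻¹ ^ (m + 1)) := by
  cases m with
  | zero => simp
  | succ m =>
    simp only [Derivation.leibniz_pow, derivative_inv', map_add, derivative_C, derivative_X,
      smul_eq_mul, nsmul_eq_mul, map_natCast, Nat.add_sub_cancel]
    ring

theorem tripleResidue_swap (p q r : ℕ) (u w : K) :
    tripleResidue p q r u w = tripleResidue p r q w u := by
  rw [tripleResidue, tripleResidue, mul_comm (_ ^ q)]

@[simp]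
theorem tripleResidue_one_zero_zero (u w : K) : tripleResidue 1 0 0 u w = 1 := by
  simp [tripleResidue]

@[simp]
theorem tripleResidue_zero (q r : ℕ) (u w : K) : tripleResidue 0 q r u w = 0 := by
  simp [tripleResidue]

theorem mul_tripleResidue_succ_succ (p q r : ℕ) {u : K} (w : K) (hu : u ≠ 0) :
    u * tripleResidue (p + 1) (q + 1) r u w =
      tripleResidue (p + 1) q r u w - tripleResidue p (q + 1) r u w := by
  simp only [tripleResidue, coeff_succ_X_mul]
  rw [← coeff_C_mul, ← map_sub]
  congr 1
  linear_combination ((C u + X)⁻¹ ^ q * (C w + X)⁻¹ ^ r) * C_add_X_mul_inv hu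

theorem sub_mul_tripleResidue (p q r : ℕ) {u w : K} (hu : u ≠ 0) (hw : w ≠ 0) :
    (w - u) * tripleResidue p (q + 1) (r + 1) u w =
      tripleResidue p (q + 1) r u w - tripleResidue p q (r + 1) u w := by
  simp only [tripleResidue]
  rw [← coeff_C_mul, ← map_sub, map_sub]
  congr 1
  linear_combination X * (C u + X)⁻¹ ^ q * (C w + X)⁻¹ ^ r *
    ((C u + X)⁻¹ * C_add_X_mul_inv hw - (C w + X)⁻¹ * C_add_X_mul_inv hu)

theorem tripleResidue_derivative (p q r : ℕ) (u w : K) :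
    p * tripleResidue (p + 1) q r u w + q * tripleResidue p (q + 1) r u w +
      r * tripleResidue p q (r + 1) u w = 0 := by
  cases p with
  | zero => simp
  | succ p =>
    have hderiv : derivative K ((C u + X : K⟦X⟧)⁻¹ ^ q * (C w + X)⁻¹ ^ r) =
        -(C (q : K) * ((C u + X)⁻¹ ^ (q + 1) * (C w + X)⁻¹ ^ r) +
          C (r : K) * ((C u + X)⁻¹ ^ q * (C w + X)⁻¹ ^ (r + 1))) := by
      rw [Derivation.leibniz, derivative_C_add_X_inv_pow, derivative_C_add_X_inv_pow]
      simp only [smul_eq_mul]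
      ring
    have hcoeff := coeff_derivative ((C u + X : K⟦X⟧)⁻¹ ^ q * (C w + X)⁻¹ ^ r) p
    rw [hderiv] at hcoeff
    simp only [map_neg, map_add, coeff_C_mul] at hcoeff
    simp only [tripleResidue, coeff_succ_X_mul]
    push_cast
    linear_combination -hcoeff

theorem coeff_C_add_X_inv_pow (k i : ℕ) {u : K} (hu : u ≠ 0) :
    coeff i ((C u + X : K⟦X⟧)⁻¹ ^ (k + 1)) =
      (-1) ^ i * ((k + i).choose k : K) * u⁻¹ ^ (k + 1 + i) := by
  have hgeom : (C u + X : K⟦X⟧)⁻¹ = C u⁻¹ * rescale (-u⁻¹) (mk 1) := by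
    have hscale : (C u⁻¹ * (C u + X) : K⟦X⟧) = rescale (-u⁻¹) (1 - X) := by
      rw [mul_add, ← map_mul, inv_mul_cancel₀ hu]
      simp
    rw [eq_comm, PowerSeries.eq_inv_iff_mul_eq_one (by simpa using hu), mul_right_comm, hscale,
      ← map_mul, mul_comm, mk_one_mul_one_sub_eq_one, map_one]
  rw [hgeom, mul_pow, ← map_pow, ← map_pow, coeff_C_mul, coeff_rescale,
    mk_one_pow_eq_mk_choose_add, coeff_mk, neg_eq_neg_one_mul, mul_pow]
  ring

/-- The numerator of `tripleResidue (p + 1) (q + 1) (r + 1) u w` over the denominator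
`u ^ (p + q + 1) * w ^ (p + r + 1)`, a form of degree `p` in `u` and `w` with integral
coefficients. -/
def tripleNumerator (p q r : ℕ) (u w : K) : K :=
  (-1) ^ p * ∑ ij ∈ Finset.HasAntidiagonal.antidiagonal p,
    ((q + ij.1).choose q : K) * ((r + ij.2).choose r : K) * (u ^ ij.2 * w ^ ij.1)

theorem tripleResidue_mul_eq_tripleNumerator (p q r : ℕ) {u w : K} (hu : u ≠ 0) (hw : w ≠ 0) :
    tripleResidue (p + 1) (q + 1) (r + 1) u w * (u ^ (p + q + 1) * w ^ (p + r + 1)) =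
      tripleNumerator p q r u w := by
  rw [tripleResidue, coeff_succ_X_mul, coeff_mul, tripleNumerator, Finset.sum_mul, Finset.mul_sum]
  refine Finset.sum_congr rfl fun ⟨i, j⟩ hij => ?_
  obtain rfl : i + j = p := Finset.HasAntidiagonal.mem_antidiagonal.1 hij
  rw [coeff_C_add_X_inv_pow _ _ hu, coeff_C_add_X_inv_pow _ _ hw, inv_pow, inv_pow,
    show u ^ (i + j + q + 1) = u ^ (q + 1 + i) * u ^ j by ring,
    show w ^ (i + j + r + 1) = w ^ (r + 1 + j) * w ^ i by ring, pow_add (-1) i j]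
  field_simp

theorem tripleNumerator_mem (O : Subring K) (p q r : ℕ) {u w : K} (hu : u ∈ O) (hw : w ∈ O) :
    tripleNumerator p q r u w ∈ O :=
  mul_mem (pow_mem (neg_mem (one_mem _)) _) (sum_mem fun _ _ =>
    mul_mem (mul_mem (natCast_mem _ _) (natCast_mem _ _)) (mul_mem (pow_mem hu _) (pow_mem hw _)))

end ThreePoles

section Contiguity

variable {K : Type*} [Field K] {a b c : K} {F : ℕ → ℕ → ℕ → K}

/-- The relations satisfied, as functions of the exponents, by the residues of
`(T - a)⁻ᵖ (T - b)⁻ᵠ (T - c)⁻ʳ` at three distinct points and by their linear combinations. The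
first three come from partial fractions, the last one from the vanishing of the residue of a
derivative. -/
structure IsContiguous (a b c : K) (F : ℕ → ℕ → ℕ → K) : Prop where
  fst_ne_snd : a ≠ b
  snd_ne_thd : b ≠ c
  thd_ne_fst : c ≠ a
  fst_snd (p q r : ℕ) : (a - b) * F (p + 1) (q + 1) r = F (p + 1) q r - F p (q + 1) r
  snd_thd (p q r : ℕ) : (b - c) * F p (q + 1) (r + 1) = F p (q + 1) r - F p q (r + 1)
  thd_fst (p q r : ℕ) : (c - a) * F (p + 1) q (r + 1) = F p q (r + 1) - F (p + 1) q r
  derivative (p q r : ℕ) : p * F (p + 1) q r + q * F p (q + 1) r + r * F p q (r + 1) = 0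

namespace IsContiguous

theorem rotate (h : IsContiguous a b c F) : IsContiguous b c a fun q r p => F p q r where
  fst_ne_snd := h.snd_ne_thd
  snd_ne_thd := h.thd_ne_fst
  thd_ne_fst := h.fst_ne_snd
  fst_snd q r p := h.snd_thd p q r
  snd_thd q r p := h.thd_fst p q r
  thd_fst q r p := h.fst_snd p q r
  derivative q r p := by linear_combination h.derivative p q r

variable [CharZero K]

theorem eq_zero_of_forall_eq (h : IsContiguous a b c F) {n : ℕ} {d : K}
    (hd : ∀ p q r, p + q + r = n + 1 → F p q r = d) :
    ∀ p q r, p + q + r = n + 2 → F p q r = 0 := by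
  have hn : (n : K) + 1 ≠ 0 := n.cast_add_one_ne_zero
  have hab := sub_ne_zero.2 h.fst_ne_snd
  have hbc := sub_ne_zero.2 h.snd_ne_thd
  have hca := sub_ne_zero.2 h.thd_ne_fst
  rintro (_ | p) (_ | q) (_ | r) hs
  · omega
  · obtain rfl : r = n + 1 := by omega
    simpa [hn] using h.derivative 0 0 (n + 1)
  · obtain rfl : q = n + 1 := by omega
    simpa [hn] using h.derivative 0 (n + 1) 0
  · refine (mul_eq_zero_iff_left hbc).1 ?_
    rw [h.snd_thd, hd _ _ _ (by omega), hd _ _ _ (by omega), sub_self]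
  · obtain rfl : p = n + 1 := by omega
    simpa [hn] using h.derivative (n + 1) 0 0
  · refine (mul_eq_zero_iff_left hca).1 ?_
    rw [h.thd_fst, hd _ _ _ (by omega), hd _ _ _ (by omega), sub_self]
  all_goals
    refine (mul_eq_zero_iff_left hab).1 ?_
    rw [h.fst_snd, hd _ _ _ (by omega), hd _ _ _ (by omega), sub_self]

theorem eq_zero_of_eq (h : IsContiguous a b c F) (h₁₂ : F 1 0 0 = F 0 1 0)
    (h₂₃ : F 0 1 0 = F 0 0 1) {p q r : ℕ} (hpqr : 2 ≤ p + q + r) : F p q r = 0 := by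
  have hlevel : ∀ n p q r, p + q + r = n + 2 → F p q r = 0 := by
    intro n
    induction n with
    | zero =>
      refine h.eq_zero_of_forall_eq (d := F 0 0 1) fun p q r hs => ?_
      obtain ⟨rfl, rfl, rfl⟩ | ⟨rfl, rfl, rfl⟩ | ⟨rfl, rfl, rfl⟩ : (p = 1 ∧ q = 0 ∧ r = 0) ∨
        (p = 0 ∧ q = 1 ∧ r = 0) ∨ (p = 0 ∧ q = 0 ∧ r = 1) := by omega
      exacts [h₁₂.trans h₂₃, h₂₃, rfl]
    | succ n ih => exact h.eq_zero_of_forall_eq ih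
  exact hlevel (p + q + r - 2) p q r (by omega)

theorem eq_zero_of_succ (h : IsContiguous a b c F) {p q r : ℕ} (hpqr : p + q + r ≠ 0)
    (hq : F (p + 1) (q + 1) r = 0) (hr : F (p + 1) q (r + 1) = 0) : F (p + 1) q r = 0 := by
  have hfst := h.fst_snd p q r
  have hthd := h.thd_fst p q r
  rw [hq, mul_zero] at hfst
  rw [hr, mul_zero] at hthd
  have hs : ((p + q + r : ℕ) : K) ≠ 0 := Nat.cast_ne_zero.2 hpqr
  refine (mul_eq_zero_iff_left hs).1 ?_
  push_cast
  linear_combination h.derivative p q r - q * hfst + r * hthd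

theorem eq_zero_and_eq_zero_of_succ_succ (h : IsContiguous a b c F) {p q r : ℕ}
    (hq : F (p + 1) (q + 2) (r + 1) = 0) (hr : F (p + 1) (q + 1) (r + 2) = 0) :
    F (p + 1) (q + 1) r = 0 ∧ F (p + 1) q (r + 1) = 0 := by
  have hmid : F (p + 1) (q + 1) (r + 1) = 0 := h.eq_zero_of_succ (by omega) hq hr
  have hq' : F (p + 1) (q + 2) r = 0 := by
    have := h.snd_thd (p + 1) (q + 1) r
    rw [hq, hmid] at this
    linear_combination -this
  have hr' : F (p + 1) q (r + 2) = 0 := by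
    have := h.snd_thd (p + 1) q (r + 1)
    rw [hr, hmid] at this
    linear_combination this
  exact ⟨h.eq_zero_of_succ (by omega) hq' hmid, h.eq_zero_of_succ (by omega) hmid hr'⟩

theorem eq_zero_of_succ_succ (h : IsContiguous a b c F) {p q r : ℕ} (hpqr : p + q + r ≠ 0)
    (hq : F (p + 1) (q + 2) (r + 1) = 0) (hr : F (p + 1) (q + 1) (r + 2) = 0) :
    F (p + 1) q r = 0 :=
  have hdown := h.eq_zero_and_eq_zero_of_succ_succ hq hr
  h.eq_zero_of_succ hpqr hdown.1 hdown.2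

theorem eq_of_diagonal_neighbors_eq_zero (h : IsContiguous a b c F) {n : ℕ}
    (hp : F (n + 2) (n + 1) (n + 1) = 0) (hq : F (n + 1) (n + 2) (n + 1) = 0)
    (hr : F (n + 1) (n + 1) (n + 2) = 0) : F 1 0 0 = F 0 1 0 ∧ F 0 1 0 = F 0 0 1 := by
  induction n with
  | zero =>
    have hfst := h.fst_snd 0 0 0
    have hsnd := h.snd_thd 0 0 0
    rw [(h.eq_zero_and_eq_zero_of_succ_succ hq hr).1, mul_zero, eq_comm, sub_eq_zero] at hfst
    rw [(h.rotate.eq_zero_and_eq_zero_of_succ_succ hr hp).1, mul_zero, eq_comm,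
      sub_eq_zero] at hsnd
    exact ⟨hfst, hsnd⟩
  | succ n ih =>
    exact ih (h.eq_zero_of_succ_succ (by omega) hq hr)
      (h.rotate.eq_zero_of_succ_succ (by omega) hr hp)
      (h.rotate.rotate.eq_zero_of_succ_succ (by omega) hp hq)

theorem eq_of_opposite_neighbors_eq_zero (h : IsContiguous a b c F) {n : ℕ}
    (hpq : F (n + 2) (n + 2) (n + 1) = 0) (hr : F (n + 1) (n + 1) (n + 2) = 0) :
    F 1 0 0 = F 0 1 0 ∧ F 0 1 0 = F 0 0 1 := by
  have hn : ((n + 1 : ℕ) : K) ≠ 0 := Nat.cast_ne_zero.2 n.succ_ne_zero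
  have hdiff := h.fst_snd (n + 1) (n + 1) (n + 1)
  have hsum := h.derivative (n + 1) (n + 1) (n + 1)
  rw [hpq, mul_zero] at hdiff
  rw [hr, mul_zero, add_zero, ← mul_add, mul_eq_zero_iff_left hn] at hsum
  refine h.eq_of_diagonal_neighbors_eq_zero (n := n) ?_ ?_ hr
  · linear_combination (hsum - hdiff) / 2
  · linear_combination (hsum + hdiff) / 2

end IsContiguous

/-- The linear combination with weights `l, m, k` of the residues at `a, b, c` of
`(T - a)⁻ᵖ (T - b)⁻ᵠ (T - c)⁻ʳ`. -/
noncomputable def residueForm (a b c l m k : K) (p q r : ℕ) : K :=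
  l * tripleResidue p q r (a - b) (a - c) + m * tripleResidue q p r (b - a) (b - c) +
    k * tripleResidue r p q (c - a) (c - b)

theorem isContiguous_residueForm (hab : a ≠ b) (hbc : b ≠ c) (hca : c ≠ a) (l m k : K) :
    IsContiguous a b c (residueForm a b c l m k) where
  fst_ne_snd := hab
  snd_ne_thd := hbc
  thd_ne_fst := hca
  fst_snd p q r := by
    have ha := mul_tripleResidue_succ_succ p q r (a - c) (sub_ne_zero.2 hab)
    have hb := mul_tripleResidue_succ_succ q p r (b - c) (sub_ne_zero.2 hab.symm)
    have hc := sub_mul_tripleResidue r p q (sub_ne_zero.2 hca) (sub_ne_zero.2 hbc.symm)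
    simp only [residueForm]
    linear_combination l * ha - m * hb + k * hc
  snd_thd p q r := by
    have ha := sub_mul_tripleResidue p q r (sub_ne_zero.2 hab) (sub_ne_zero.2 hca.symm)
    have hb := mul_tripleResidue_succ_succ q r p (b - a) (sub_ne_zero.2 hbc)
    have hc := mul_tripleResidue_succ_succ r q p (c - a) (sub_ne_zero.2 hbc.symm)
    simp only [tripleResidue_swap _ _ p] at hb hc
    simp only [residueForm]
    linear_combination l * ha + m * hb - k * hc
  thd_fst p q r := by
    have ha := mul_tripleResidue_succ_succ p r q (a - b) (sub_ne_zero.2 hca.symm)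
    have hb := sub_mul_tripleResidue q p r (sub_ne_zero.2 hab.symm) (sub_ne_zero.2 hbc)
    have hc := mul_tripleResidue_succ_succ r p q (c - b) (sub_ne_zero.2 hca)
    simp only [tripleResidue_swap _ _ q _ (a - b)] at ha
    simp only [residueForm]
    linear_combination -l * ha - m * hb + k * hc
  derivative p q r := by
    have ha := tripleResidue_derivative p q r (a - b) (a - c)
    have hb := tripleResidue_derivative q p r (b - a) (b - c)
    have hc := tripleResidue_derivative r p q (c - a) (c - b)
    simp only [residueForm]
    linear_combination l * ha + m * hb + k * hc

variable [CharZero K] (hab : a ≠ b) (hbc : b ≠ c) (hca : c ≠ a)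

include hab hbc hca

-- The residues of a rational function with a zero of order two at infinity sum to zero.
theorem residueForm_one_eq_zero {p q r : ℕ} (h : 2 ≤ p + q + r) :
    residueForm a b c 1 1 1 p q r = 0 :=
  (isContiguous_residueForm hab hbc hca 1 1 1).eq_zero_of_eq (by simp [residueForm])
    (by simp [residueForm]) h

theorem residueForm_ne_zero_or {l m k : K} (h : ¬ (l = m ∧ m = k)) (n : ℕ) :
    residueForm a b c l m k (n + 2) (n + 2) (n + 1) ≠ 0 ∨
      residueForm a b c l m k (n + 1) (n + 1) (n + 2) ≠ 0 := by
  by_contra! h₀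
  exact h (by simpa [residueForm] using
    (isContiguous_residueForm hab hbc hca l m k).eq_of_opposite_neighbors_eq_zero h₀.1 h₀.2)

end Contiguity

section AbsoluteValue

variable {K : Type*} [Field K] {v : AbsoluteValue K ℝ} {u w : K} {M : ℝ}

theorem map_tripleNumerator_le (p q r : ℕ) (hu : v u ≤ M) (hw : v w ≤ M) :
    v (tripleNumerator p q r u w) ≤ 2 ^ (2 * p + q + r) * M ^ p := by
  have hM : 0 ≤ M := (v.nonneg u).trans hu
  have hterm : ∀ ij ∈ Finset.HasAntidiagonal.antidiagonal p,
      v (((q + ij.1).choose q : K) * ((r + ij.2).choose r : K) * (u ^ ij.2 * w ^ ij.1)) ≤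
        2 ^ (p + q + r) * M ^ p := by
    rintro ⟨i, j⟩ hij
    obtain rfl : i + j = p := Finset.HasAntidiagonal.mem_antidiagonal.1 hij
    have hchoose (m k : ℕ) : v (m.choose k : K) ≤ 2 ^ m :=
      (v.apply_nat_le_self _).trans (by exact_mod_cast Nat.choose_le_two_pow _ _)
    simp only [map_mul, map_pow]
    calc _ ≤ (2 ^ (q + i) * 2 ^ (r + j)) * (M ^ j * M ^ i) := by
          gcongr <;> exact hchoose _ _
      _ = 2 ^ (i + j + q + r) * M ^ (i + j) := by ring
  have hcard : ((p + 1 : ℕ) : ℝ) ≤ 2 ^ p := by exact_mod_cast Nat.lt_two_pow_self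
  rw [tripleNumerator, v.map_mul, v.map_pow, v.map_neg, v.map_one, one_pow, one_mul]
  calc _ ≤ (p + 1) • (2 ^ (p + q + r) * M ^ p) := by
        rw [← Finset.Nat.card_antidiagonal p]
        exact (v.sum_le _ _).trans (Finset.sum_le_card_nsmul _ _ _ hterm)
    _ ≤ 2 ^ p * (2 ^ (p + q + r) * M ^ p) := by rw [nsmul_eq_mul]; gcongr
    _ = 2 ^ (2 * p + q + r) * M ^ p := by ring

theorem map_sum_le_of_forall_le (hv : IsNonarchimedean v) {α : Type*} {s : Finset α} {f : α → K}
    (hM : 0 ≤ M) (h : ∀ i ∈ s, v (f i) ≤ M) : v (∑ i ∈ s, f i) ≤ M := by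
  rcases s.eq_empty_or_nonempty with rfl | hs
  · simpa
  · exact (hv.apply_sum_le_sup hs).trans (Finset.sup'_le hs _ h)

theorem map_tripleNumerator_le_of_isNonarchimedean (hv : IsNonarchimedean v) (p q r : ℕ)
    (hu : v u ≤ M) (hw : v w ≤ M) : v (tripleNumerator p q r u w) ≤ M ^ p := by
  have hM : 0 ≤ M := (v.nonneg u).trans hu
  rw [tripleNumerator, v.map_mul, v.map_pow, v.map_neg, v.map_one, one_pow, one_mul]
  refine map_sum_le_of_forall_le hv (by positivity) fun ⟨i, j⟩ hij => ?_
  obtain rfl : i + j = p := Finset.HasAntidiagonal.mem_antidiagonal.1 hij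
  simp only [map_mul, map_pow]
  calc _ ≤ (1 * 1) * (M ^ j * M ^ i) := by gcongr <;> exact hv.apply_natCast_le_one
    _ = M ^ (i + j) := by ring

theorem map_add_pow_prime_sub_le (hv : IsNonarchimedean v) {p : ℕ} (hp : p.Prime)
    (hu : v u ≤ M) (hw : v w ≤ M) :
    v ((u + w) ^ p - (u ^ p + w ^ p)) ≤ v p * M ^ p := by
  have hM : 0 ≤ M := (v.nonneg u).trans hu
  rw [add_pow_prime_eq hp, add_sub_cancel_left, mul_assoc, mul_assoc, v.map_mul, ← mul_assoc,
    Finset.mul_sum]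
  refine mul_le_mul_of_nonneg_left
    (map_sum_le_of_forall_le hv (by positivity) fun k hk => ?_) (v.nonneg _)
  obtain ⟨hk₀, hkp⟩ := Finset.mem_Ioo.1 hk
  have hterm : u * w * (u ^ (k - 1) * w ^ (p - k - 1) * ((p.choose k / p : ℕ) : K)) =
      u ^ k * w ^ (p - k) * ((p.choose k / p : ℕ) : K) := by
    rw [← mul_pow_sub_one hk₀.ne' u, ← mul_pow_sub_one (Nat.sub_pos_of_lt hkp).ne' w]
    ring
  rw [hterm, v.map_mul, v.map_mul, v.map_pow, v.map_pow]
  calc _ ≤ M ^ k * M ^ (p - k) * 1 := by gcongr; exact hv.apply_natCast_le_one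
    _ = M ^ p := by rw [mul_one, ← pow_add, Nat.add_sub_cancel' hkp.le]

theorem map_sum_pow_prime_sub_le (hv : IsNonarchimedean v) {p : ℕ} (hp : p.Prime) {α : Type*}
    {s : Finset α} {f : α → K} (hM : 0 ≤ M) (h : ∀ i ∈ s, v (f i) ≤ M) :
    v ((∑ i ∈ s, f i) ^ p - ∑ i ∈ s, f i ^ p) ≤ v p * M ^ p := by
  induction s using Finset.cons_induction with
  | empty =>
    rw [Finset.sum_empty, Finset.sum_empty, sub_zero, zero_pow hp.ne_zero, v.map_zero]
    exact mul_nonneg (v.nonneg _) (by positivity)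
  | cons a s ha ih =>
    rw [Finset.forall_mem_cons] at h
    have hadd := map_add_pow_prime_sub_le hv hp h.1 (map_sum_le_of_forall_le hv hM h.2)
    rw [Finset.sum_cons, Finset.sum_cons]
    refine (congrArg v ?_).trans_le ((hv _ _).trans (max_le hadd (ih h.2)))
    ring

end AbsoluteValue

section Pade

variable {K : Type*} [Field K] {x y : K}

theorem residueForm_eq_of_add_eq_one (hx : x ≠ 0) (hy : y ≠ 0) (hxy : x + y = 1) (l m k : K)
    {p r n : ℕ} (h : p + r + 1 = 2 * n) :
    residueForm y (-x) 0 l m k (p + 1) (p + 1) (r + 1) =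
      l * (tripleNumerator p p r 1 y / y ^ (2 * n)) -
        m * (tripleNumerator p p r (-1) (-x) / x ^ (2 * n)) +
        k * (tripleNumerator r p p (-y) x / (x ^ (2 * n) * y ^ (2 * n))) := by
  have h₁ : y - -x = 1 := by linear_combination hxy
  have h₂ : -x - y = -1 := by linear_combination -hxy
  have hpp : (-1 : K) ^ (p + p + 1) = -1 := Odd.neg_one_pow ⟨p, by ring⟩
  have ha := tripleResidue_mul_eq_tripleNumerator p p r one_ne_zero hy
  have hb := tripleResidue_mul_eq_tripleNumerator p p r (u := -1) (by simp) (neg_ne_zero.2 hx)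
  have hc := tripleResidue_mul_eq_tripleNumerator r p p (neg_ne_zero.2 hy) hx
  rw [one_pow, one_mul, h] at ha
  rw [hpp, h, (even_two_mul n).neg_pow] at hb
  rw [add_comm r p, h, (even_two_mul n).neg_pow] at hc
  rw [residueForm, h₁, h₂, ← ha, ← hb, ← hc]
  simp only [sub_zero, zero_sub, neg_neg]
  field_simp
  ring

variable [CharZero K]

theorem exists_tripleNumerator_mul_sub_mul_ne_zero (hx : x ≠ 0) (hy : y ≠ 0) (hxy : x + y = 1)
    {s t : K} (hst : s + t ≠ 0) {n : ℕ} (hn : 0 < n) :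
    ∃ p r, p ≤ n ∧ r ≤ n ∧ p + r + 1 = 2 * n ∧
      t * (tripleNumerator p p r 1 y / y ^ (2 * n)) +
        s * (tripleNumerator p p r (-1) (-x) / x ^ (2 * n)) ≠ 0 := by
  obtain ⟨m, rfl⟩ := Nat.exists_eq_add_one.2 hn
  have hab : y ≠ -x := by
    rintro rfl
    simp at hxy
  have hne : ¬ (t = -s ∧ -s = 0) := fun h => hst (by rw [h.1, add_neg_cancel])
  rcases residueForm_ne_zero_or hab (neg_ne_zero.2 hx) hy.symm hne m with h | h
  · refine ⟨m + 1, m, le_rfl, m.le_succ, by ring, ?_⟩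
    rwa [residueForm_eq_of_add_eq_one hx hy hxy _ _ _ (by ring : m + 1 + m + 1 = 2 * (m + 1)),
      zero_mul, add_zero, neg_mul, sub_neg_eq_add] at h
  · refine ⟨m, m + 1, m.le_succ, le_rfl, by ring, ?_⟩
    rwa [residueForm_eq_of_add_eq_one hx hy hxy _ _ _ (by ring : m + (m + 1) + 1 = 2 * (m + 1)),
      zero_mul, add_zero, neg_mul, sub_neg_eq_add] at h

theorem pow_mul_tripleNumerator_add_eq_zero (hx : x ≠ 0) (hy : y ≠ 0) (hxy : x + y = 1)
    {p r n : ℕ} (h : p + r + 1 = 2 * n) :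
    x ^ (2 * n) * tripleNumerator p p r 1 y + y ^ (2 * n) * -tripleNumerator p p r (-1) (-x) +
      tripleNumerator r p p (-y) x = 0 := by
  have hab : y ≠ -x := by
    rintro rfl
    simp at hxy
  have hsum := residueForm_one_eq_zero hab (neg_ne_zero.2 hx) hy.symm
    (by omega : 2 ≤ (p + 1) + (p + 1) + (r + 1))
  rw [residueForm_eq_of_add_eq_one hx hy hxy _ _ _ h] at hsum
  field_simp at hsum
  linear_combination hsum

end Pade

section UnitLine

variable {R : Type*} [CommRing R]

/-- The solutions of the unit equation `x + y = 1` in `R`. -/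
def unitLine (R : Type*) [CommRing R] : Set (Rˣ × Rˣ) := {x | (x.1 : R) + x.2 = 1}

theorem injOn_fst_unitLine : Set.InjOn (fun x : Rˣ × Rˣ => (x.1 : R)) (unitLine R) := by
  intro x (hx : (x.1 : R) + x.2 = 1) y (hy : (y.1 : R) + y.2 = 1) (hxy : (x.1 : R) = y.1)
  exact Prod.ext (Units.ext hxy) (Units.ext (by linear_combination hx - hy - hxy))

end UnitLine

section PowerDeterminant

variable {K : Type*} [Field K]

/-- The six terms of the determinant with rows `(1, 1, 1)`, `(t.1, t.2, 1)`, `(s.1, s.2, 1)`. -/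
def detTerms (t s : K × K) : Fin 6 → K :=
  ![t.2, -s.2, -t.1, s.1, t.1 * s.2, -(t.2 * s.1)]

theorem sum_detTerms_pow (t s : K × K) {n : ℕ} (hn : Odd n) :
    ∑ k, detTerms t s k ^ n = (t.1 ^ n - 1) * (s.2 ^ n - 1) - (t.2 ^ n - 1) * (s.1 ^ n - 1) := by
  simp only [Fin.sum_univ_six, detTerms, Matrix.cons_val, hn.neg_pow, mul_pow]
  ring

theorem detTerms_mem {R : Subring K} {t s : K × K} (ht₁ : t.1 ∈ R) (ht₂ : t.2 ∈ R)
    (hs₁ : s.1 ∈ R) (hs₂ : s.2 ∈ R) (k : Fin 6) : detTerms t s k ∈ R := by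
  fin_cases k
  exacts [ht₂, neg_mem hs₂, neg_mem ht₁, hs₁, mul_mem ht₁ hs₂, neg_mem (mul_mem ht₂ hs₁)]

theorem map_detTerms_le {v : AbsoluteValue K ℝ} {t s : K × K} {a b : ℝ} (ha : 1 ≤ a)
    (hb : 1 ≤ b) (ht₁ : v t.1 ≤ a) (ht₂ : v t.2 ≤ a) (hs₁ : v s.1 ≤ b) (hs₂ : v s.2 ≤ b)
    (k : Fin 6) : v (detTerms t s k) ≤ a * b := by
  have hat {z : K} (hz : v z ≤ a) : v z ≤ a * b :=
    hz.trans (le_mul_of_one_le_right (by positivity) hb)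
  have hbt {z : K} (hz : v z ≤ b) : v z ≤ a * b :=
    hz.trans (le_mul_of_one_le_left (by positivity) ha)
  have hab {z z' : K} (hz : v z ≤ a) (hz' : v z' ≤ b) : v (z * z') ≤ a * b := by
    rw [map_mul]; gcongr
  fin_cases k
  · exact hat ht₂
  · exact (v.map_neg _).trans_le (hbt hs₂)
  · exact (v.map_neg _).trans_le (hat ht₁)
  · exact hbt hs₁
  · exact hab ht₁ hs₂
  · exact (v.map_neg _).trans_le (hab ht₂ hs₁)

theorem card_le_of_forall_mul_one_sub_pow_add_eq_zero [CharZero K] {p : ℕ} (hp : 2 ≤ p)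
    {l m k : K} (hlm : l ≠ 0 ∨ m ≠ 0) {B : Finset K}
    (hB : ∀ z ∈ B, l * (1 - z) ^ p + m * z ^ p + k = 0) : B.card ≤ p := by
  open Polynomial in
  let Q : K[X] := C l * (1 - X) ^ p + C m * X ^ p + C k
  have hQ : Q ≠ 0 := by
    intro hQ
    have hp₀ : (p : K) ≠ 0 := Nat.cast_ne_zero.2 (by omega)
    have hp₁ : p - 1 ≠ 0 := by omega
    have hderiv (z : K) : Q.derivative.eval z = 0 := by rw [hQ]; simp
    have hl : l = 0 := by simpa [Q, Polynomial.derivative_pow, hp₀, hp₁] using hderiv 0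
    have hm : m = 0 := by simpa [Q, Polynomial.derivative_pow, hp₀, hp₁] using hderiv 1
    exact hlm.elim (· hl) (· hm)
  have hdeg : Q.natDegree ≤ p := by
    simp only [Q]
    compute_degree
  exact (Polynomial.card_le_degree_of_subset_roots (p := Q) fun z hz => by
    simpa [hQ, Q] using hB z hz).trans hdeg

end PowerDeterminant

/-- Finitely many weighted absolute values on a field which satisfy Artin's inequality on a
subring of integers; the archimedean ones have total weight one and extend the usual absolute
value. -/
structure PlaceSystem (K ι : Type*) [Field K] [Fintype ι] where
  /-- The absolute values. -/
  v : ι → AbsoluteValue K ℝ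
  /-- The weights. -/
  w : ι → ℝ
  /-- The archimedean places. -/
  arch : Finset ι
  /-- The elements which are integral outside the given places. -/
  O : Subring K
  w_nonneg : ∀ i, 0 ≤ w i
  sum_arch : ∑ i ∈ arch, w i = 1
  arch_natCast : ∀ i ∈ arch, ∀ n : ℕ, v i n = n
  nonarch : ∀ i ∉ arch, IsNonarchimedean (v i)
  sum_log_nonneg : ∀ D ∈ O, D ≠ 0 → 0 ≤ ∑ i, w i * Real.log (v i D)

namespace PlaceSystem

variable {K ι : Type*} [Field K] [Fintype ι] (P : PlaceSystem K ι)

include P in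
theorem charZero : CharZero K := by
  obtain ⟨i, hi⟩ : P.arch.Nonempty := by
    rw [Finset.nonempty_iff_ne_empty]
    intro h
    simpa [h] using P.sum_arch
  refine ⟨fun m n hmn => ?_⟩
  rw [← Nat.cast_inj (R := ℝ), ← P.arch_natCast i hi m, hmn, P.arch_natCast i hi]

section LogSum

/-- The weighted sum of the logarithms of positive local quantities. -/
noncomputable def logSum (F : ι → ℝ) : ℝ := ∑ i, P.w i * Real.log (F i)

variable {F G : ι → ℝ}

theorem logSum_mono (hF : ∀ i, 0 < F i) (hFG : ∀ i, F i ≤ G i) : P.logSum F ≤ P.logSum G :=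
  Finset.sum_le_sum fun i _ =>
    mul_le_mul_of_nonneg_left (Real.log_le_log (hF i) (hFG i)) (P.w_nonneg i)

theorem logSum_mul (hF : ∀ i, 0 < F i) (hG : ∀ i, 0 < G i) :
    P.logSum (F * G) = P.logSum F + P.logSum G := by
  rw [logSum, logSum, logSum, ← Finset.sum_add_distrib]
  refine Finset.sum_congr rfl fun i _ => ?_
  rw [Pi.mul_apply, Real.log_mul (hF i).ne' (hG i).ne', mul_add]

theorem logSum_pow (F : ι → ℝ) (n : ℕ) : P.logSum (F ^ n) = n * P.logSum F := by
  rw [logSum, logSum, Finset.mul_sum]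
  refine Finset.sum_congr rfl fun i _ => ?_
  rw [Pi.pow_apply, Real.log_pow, mul_left_comm]

theorem logSum_nonneg {D : K} (hD : D ∈ P.O) (hD₀ : D ≠ 0) : 0 ≤ P.logSum (P.v · D) :=
  P.sum_log_nonneg D hD hD₀

theorem logSum_units {a : Kˣ} (ha : a ∈ P.O.toSubmonoid.units) : P.logSum (P.v · a) = 0 := by
  refine le_antisymm ?_ (P.logSum_nonneg ha.1 a.ne_zero)
  have hinv := P.logSum_nonneg (D := ((a⁻¹ : Kˣ) : K)) ha.2 a⁻¹.ne_zero
  simp only [logSum, Units.val_inv_eq_inv_val, map_inv₀, Real.log_inv, mul_neg,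
    Finset.sum_neg_distrib] at hinv
  exact neg_nonneg.1 hinv

open Classical in
/-- The constant `C` at the archimedean places, and `1` at the others. -/
noncomputable def archFactor (C : ℝ) (i : ι) : ℝ := if i ∈ P.arch then C else 1

theorem archFactor_pos {C : ℝ} (hC : 0 < C) (i : ι) : 0 < P.archFactor C i := by
  rw [archFactor]; split_ifs <;> positivity

theorem archFactor_mul (C D : ℝ) (i : ι) :
    P.archFactor (C * D) i = P.archFactor C i * P.archFactor D i := by
  simp only [archFactor]; split_ifs <;> simp

theorem logSum_archFactor (C : ℝ) : P.logSum (P.archFactor C) = Real.log C := by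
  classical
  have hlog (i : ι) : P.w i * Real.log (P.archFactor C i) =
      if i ∈ P.arch then P.w i * Real.log C else 0 := by
    rw [archFactor]; split_ifs <;> simp
  simp only [logSum, hlog]
  rw [Finset.sum_ite_mem, Finset.univ_inter, ← Finset.sum_mul, P.sum_arch, one_mul]

theorem map_add_le {i : ι} {a b : K} {M : ℝ} (ha : P.v i a ≤ M) (hb : P.v i b ≤ M) :
    P.v i (a + b) ≤ P.archFactor 2 i * M := by
  rw [archFactor]
  split_ifs with h
  · exact ((P.v i).add_le _ _).trans (by linarith)
  · rw [one_mul]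
    exact (P.nonarch i h _ _).trans (max_le ha hb)

end LogSum

section Height

/-- The pairs of units of the ring of integers of a place system. -/
def unitPairs : Subgroup (Kˣ × Kˣ) :=
  P.O.toSubmonoid.units.prod P.O.toSubmonoid.units

/-- The local factors of the height of the point `(1 : u.1 : u.2)` of the projective plane. -/
noncomputable def localHeight (u : Kˣ × Kˣ) (i : ι) : ℝ :=
  max 1 (max (P.v i u.1) (P.v i u.2))

/-- The logarithmic height of the point `(1 : u.1 : u.2)` of the projective plane. -/
noncomputable def height (u : Kˣ × Kˣ) : ℝ := P.logSum (P.localHeight u)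

theorem fst_mem {u : Kˣ × Kˣ} (hu : u ∈ P.unitPairs) : (u.1 : K) ∈ P.O := hu.1.1

theorem snd_mem {u : Kˣ × Kˣ} (hu : u ∈ P.unitPairs) : (u.2 : K) ∈ P.O := hu.2.1

variable (u : Kˣ × Kˣ) (i : ι)

theorem one_le_localHeight : 1 ≤ P.localHeight u i := le_max_left _ _

theorem localHeight_pos : 0 < P.localHeight u i := one_pos.trans_le (P.one_le_localHeight u i)

theorem fst_le_localHeight : P.v i u.1 ≤ P.localHeight u i :=
  (le_max_left _ _).trans (le_max_right _ _)

theorem snd_le_localHeight : P.v i u.2 ≤ P.localHeight u i :=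
  (le_max_right _ _).trans (le_max_right _ _)

theorem log_localHeight : Real.log (P.localHeight u i) =
    max 0 (max (Real.log (P.v i u.1)) (Real.log (P.v i u.2))) := by
  have hlog {a b : ℝ} (ha : 0 < a) (hb : 0 < b) :
      Real.log (max a b) = max (Real.log a) (Real.log b) :=
    Real.strictMonoOn_log.monotoneOn.map_max ha hb
  have h₁ : 0 < P.v i u.1 := (P.v i).pos u.1.ne_zero
  have h₂ : 0 < P.v i u.2 := (P.v i).pos u.2.ne_zero
  rw [localHeight, hlog one_pos (lt_max_of_lt_left h₁), hlog h₁ h₂, Real.log_one]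

variable {u i}

theorem localHeight_pow_mul_le {a : ℕ} {D : K} {M : ℝ} (h₀ : P.v i D ≤ M)
    (h₁ : P.v i (u.1 ^ a * D) ≤ M) (h₂ : P.v i (u.2 ^ a * D) ≤ M) :
    P.localHeight u i ^ a * P.v i D ≤ M := by
  rw [map_mul, map_pow] at h₁ h₂
  rw [localHeight]
  rcases max_choice 1 (max (P.v i u.1) (P.v i u.2)) with h | h <;> rw [h]
  · rwa [one_pow, one_mul]
  · rcases max_choice (P.v i u.1) (P.v i u.2) with h | h <;> rwa [h]

/-- `A` is integral and as large as the value at the point `u` of a polynomial of degree `b` whose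
coefficients have total size `c`. -/
structure HasHeightBound (c : ℝ) (b : ℕ) (u : Kˣ × Kˣ) (A : K) : Prop where
  mem : A ∈ P.O
  le : ∀ i, P.v i A ≤ P.archFactor c i * P.localHeight u i ^ b

end Height

section Approximation

variable {P} {x y : Kˣ × Kˣ} {a b n : ℕ} {c : ℝ} {A B C : K}

theorem HasHeightBound.neg (hA : P.HasHeightBound c b x A) : P.HasHeightBound c b x (-A) where
  mem := neg_mem hA.mem
  le i := ((P.v i).map_neg A).trans_le (hA.le i)

theorem HasHeightBound.mul_le (hA : P.HasHeightBound c b x A) {i : ι} {z : K} {M : ℝ}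
    (hz : P.v i z ≤ M) : P.v i (A * z) ≤ P.archFactor c i * P.localHeight x i ^ b * M := by
  rw [map_mul]
  exact mul_le_mul (hA.le i) hz ((P.v i).nonneg _) (((P.v i).nonneg _).trans (hA.le i))

theorem HasHeightBound.localHeight_pow_mul_le (hy : y ∈ unitLine K)
    (hA : P.HasHeightBound c b x A) (hB : P.HasHeightBound c b x B)
    (hC : P.HasHeightBound c b x C) (hrel : (x.1 : K) ^ a * A + x.2 ^ a * B + C = 0) (i : ι) :
    P.localHeight x i ^ a * P.v i (A * (y / x ^ a).2 + B * -(y / x ^ a).1) ≤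
      P.archFactor (2 * c) i * (P.localHeight x i ^ b * P.localHeight (y / x ^ a) i) := by
  set t := y / x ^ a
  have hy₁ : (x.1 : K) ^ a * t.1 = y.1 := by simp [t, mul_div_cancel₀]
  have hy₂ : (x.2 : K) ^ a * t.2 = y.2 := by simp [t, mul_div_cancel₀]
  have hline : (x.1 : K) ^ a * t.1 + x.2 ^ a * t.2 = 1 := by rw [hy₁, hy₂]; exact hy
  have h₁ := P.fst_le_localHeight t i
  have h₂ := P.snd_le_localHeight t i
  have h₀ : P.v i (1 : K) ≤ P.localHeight t i := (map_one _).trans_le (P.one_le_localHeight t i)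
  have hrel₁ : (x.1 : K) ^ a * (A * t.2 + B * -t.1) = -C * t.2 + -B * 1 := by
    linear_combination t.2 * hrel - B * hline
  have hrel₂ : (x.2 : K) ^ a * (A * t.2 + B * -t.1) = A * 1 + C * t.1 := by
    linear_combination -t.1 * hrel + A * hline
  rw [archFactor_mul, mul_assoc, ← mul_assoc (P.archFactor c i)]
  refine P.localHeight_pow_mul_le ?_ ?_ ?_
  · exact P.map_add_le (hA.mul_le h₂) (hB.mul_le (by rwa [(P.v i).map_neg]))
  · rw [hrel₁]
    exact P.map_add_le (hC.neg.mul_le h₂) (hB.neg.mul_le h₀)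
  · rw [hrel₂]
    exact P.map_add_le (hA.mul_le h₀) (hC.mul_le h₁)

-- By Cramer's rule, a nonzero determinant of two forms vanishing at `(x.1 ^ a, x.2 ^ a, 1)`, of
-- which one has small coefficients and the other the coefficients `(t.1, t.2, -1)`, is divisible
-- by the point itself.
theorem HasHeightBound.mul_height_le (hx : x ∈ P.unitPairs) (hy : y ∈ P.unitPairs)
    (hy₁ : y ∈ unitLine K) (hc : 0 < c)
    (hA : P.HasHeightBound c b x A) (hB : P.HasHeightBound c b x B)
    (hC : P.HasHeightBound c b x C) (hrel : (x.1 : K) ^ a * A + x.2 ^ a * B + C = 0)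
    (hdet : A * (y.2 / x.2 ^ a) + B * -(y.1 / x.1 ^ a) ≠ 0) :
    a * P.height x ≤ Real.log (2 * c) + (b * P.height x + P.height (y / x ^ a)) := by
  set t := y / x ^ a with ht
  have htm : t ∈ P.unitPairs := div_mem hy (pow_mem hx a)
  set D : K := A * t.2 + B * -t.1 with hD
  have hDm : D ∈ P.O := add_mem (mul_mem hA.mem (P.snd_mem htm))
    (mul_mem hB.mem (neg_mem (P.fst_mem htm)))
  have hD₀ : D ≠ 0 := by simpa [hD, ht] using hdet
  have hpow (k : ℕ) (i : ι) : 0 < (P.localHeight x ^ k) i := pow_pos (P.localHeight_pos x i) k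
  have hDpos (i : ι) : 0 < P.v i D := (P.v i).pos hD₀
  have hmul (i : ι) : 0 < (P.localHeight x ^ b * P.localHeight t) i :=
    mul_pos (hpow b i) (P.localHeight_pos t i)
  have hle : P.logSum (P.localHeight x ^ a * (P.v · D)) ≤
      P.logSum (P.archFactor (2 * c) * (P.localHeight x ^ b * P.localHeight t)) :=
    P.logSum_mono (fun i => mul_pos (hpow a i) (hDpos i))
      (localHeight_pow_mul_le hy₁ hA hB hC hrel)
  rw [P.logSum_mul (hpow a) hDpos, P.logSum_mul (P.archFactor_pos (by positivity)) hmul,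
    P.logSum_mul (hpow b) (P.localHeight_pos t), P.logSum_pow, P.logSum_pow,
    P.logSum_archFactor] at hle
  exact (le_add_of_nonneg_right (P.logSum_nonneg hDm hD₀)).trans hle

theorem height_le_of_ne (hx : x ∈ P.unitPairs) (hy : y ∈ P.unitPairs) (hx₁ : x ∈ unitLine K)
    (hy₁ : y ∈ unitLine K) (hxy : x ≠ y) : P.height x ≤ Real.log 2 + P.height (y / x) := by
  have hone : P.HasHeightBound 1 0 x 1 := ⟨one_mem _, fun i => by simp [archFactor]⟩
  have hline : (x.1 : K) + x.2 = 1 := hx₁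
  have hline' : (y.1 : K) + y.2 = 1 := hy₁
  have h := hone.mul_height_le (a := 1) hx hy hy₁ one_pos hone hone.neg
    (by rw [pow_one, pow_one]; linear_combination hline) fun hdet => by
      refine hxy (injOn_fst_unitLine hx₁ hy₁ ?_)
      simp only [pow_one] at hdet
      have h₁ := x.1.ne_zero
      have h₂ := x.2.ne_zero
      field_simp at hdet
      change (x.1 : K) = y.1
      linear_combination hdet - x.1 * hline' + y.1 * hline
  simpa using h

theorem hasHeightBound_tripleNumerator {p q r : ℕ} (hp : p ≤ n) (hqr : 2 * p + q + r ≤ 4 * n)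
    {u w : K} (hu : u ∈ P.O) (hw : w ∈ P.O) (hu_le : ∀ i, P.v i u ≤ P.localHeight x i)
    (hw_le : ∀ i, P.v i w ≤ P.localHeight x i) :
    P.HasHeightBound (16 ^ n) n x (tripleNumerator p q r u w) where
  mem := tripleNumerator_mem P.O p q r hu hw
  le i := by
    have hone := P.one_le_localHeight x i
    have hpow : P.localHeight x i ^ p ≤ P.localHeight x i ^ n := by gcongr
    rw [archFactor]
    split_ifs with hi
    · refine (map_tripleNumerator_le p q r (hu_le i) (hw_le i)).trans ?_
      rw [show (16 : ℝ) = 2 ^ 4 by norm_num, ← pow_mul]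
      gcongr
      exact one_le_two
    · rw [one_mul]
      exact (map_tripleNumerator_le_of_isNonarchimedean (P.nonarch i hi) p q r (hu_le i)
        (hw_le i)).trans hpow

theorem exists_hasHeightBound (hx : x ∈ P.unitPairs) (hx₁ : x ∈ unitLine K) {s t : K}
    (hst : s + t ≠ 0) (hn : 0 < n) :
    ∃ A B C : K, P.HasHeightBound (16 ^ n) n x A ∧ P.HasHeightBound (16 ^ n) n x B ∧
      P.HasHeightBound (16 ^ n) n x C ∧ (x.1 : K) ^ (2 * n) * A + x.2 ^ (2 * n) * B + C = 0 ∧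
      A * (t / x.2 ^ (2 * n)) + B * -(s / x.1 ^ (2 * n)) ≠ 0 := by
  have := P.charZero
  obtain ⟨p, r, hp, hr, hpr, hne⟩ :=
    exists_tripleNumerator_mul_sub_mul_ne_zero x.1.ne_zero x.2.ne_zero hx₁ hst hn
  have hm₁ := P.fst_mem hx
  have hm₂ := P.snd_mem hx
  have h₁ := P.fst_le_localHeight x
  have h₂ := P.snd_le_localHeight x
  have h₀ := P.one_le_localHeight x
  refine ⟨_, _, _, ?_, ?_, ?_, pow_mul_tripleNumerator_add_eq_zero x.1.ne_zero x.2.ne_zero hx₁ hpr,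
    fun h => hne (by linear_combination h)⟩
  · exact hasHeightBound_tripleNumerator hp (by omega) (one_mem _) hm₂ (by simpa using h₀) h₂
  · exact (hasHeightBound_tripleNumerator hp (by omega) (neg_mem (one_mem _)) (neg_mem hm₁)
      (by simpa using h₀) (by simpa using h₁)).neg
  · exact hasHeightBound_tripleNumerator hr (by omega) (neg_mem hm₂) hm₁ (by simpa using h₂) h₁

theorem mul_height_le (hx : x ∈ P.unitPairs) (hy : y ∈ P.unitPairs) (hx₁ : x ∈ unitLine K)
    (hy₁ : y ∈ unitLine K) (hn : 0 < n) :
    n * P.height x ≤ n * Real.log 32 + P.height (y / x ^ (2 * n)) := by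
  have hline : (y.1 : K) + y.2 = 1 := hy₁
  obtain ⟨A, B, C, hA, hB, hC, hrel, hdet⟩ :=
    exists_hasHeightBound hx hx₁ (hline.trans_ne one_ne_zero) hn
  have h := hA.mul_height_le hx hy hy₁ (by positivity) hB hC hrel hdet
  have hlog : Real.log (2 * 16 ^ n) ≤ n * Real.log 32 := by
    rw [← Real.log_pow, show (32 : ℝ) = 2 * 16 by norm_num, mul_pow]
    gcongr
    exact le_self_pow₀ one_le_two hn.ne'
  push_cast at h
  linarith

end Approximation

section PrimePowers

variable {P} {p : ℕ} {x : Kˣ × Kˣ}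

theorem map_sum_pow_prime_le {κ : Type*} [Fintype κ] (hp : p.Prime) {f : κ → K}
    (hf : ∑ k, f k = 0) {i : ι} {M : ℝ} (hM : 0 ≤ M) (h : ∀ k, P.v i (f k) ≤ M) :
    P.v i (∑ k, f k ^ p) ≤ P.archFactor (Fintype.card κ / p) i * P.v i p * M ^ p := by
  have hp₀ : (p : ℝ) ≠ 0 := Nat.cast_ne_zero.2 hp.ne_zero
  rw [archFactor]
  split_ifs with hi
  · rw [P.arch_natCast i hi, div_mul_cancel₀ _ hp₀]
    calc P.v i (∑ k, f k ^ p) ≤ ∑ k, P.v i (f k ^ p) := (P.v i).sum_le _ _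
      _ ≤ ∑ _k : κ, M ^ p := Finset.sum_le_sum fun k _ => by
        rw [map_pow]
        exact pow_le_pow_left₀ ((P.v i).nonneg _) (h k) p
      _ = Fintype.card κ * M ^ p := by simp
  · have hsub := map_sum_pow_prime_sub_le (P.nonarch i hi) hp (s := Finset.univ) hM fun k _ => h k
    rwa [hf, zero_pow hp.ne_zero, zero_sub, (P.v i).map_neg, ← one_mul (P.v i p)] at hsub

theorem log_prime_sub_log_six_le (hp : p.Prime) (hodd : Odd p) (hinv : (p : K)⁻¹ ∈ P.O)
    {t s : Kˣ × Kˣ} (ht : t ∈ P.unitPairs) (hs : s ∈ P.unitPairs)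
    (hdet₁ : ((t.1 : K) - 1) * (s.2 - 1) - (t.2 - 1) * (s.1 - 1) = 0)
    (hdet : ((t.1 : K) ^ p - 1) * (s.2 ^ p - 1) - (t.2 ^ p - 1) * (s.1 ^ p - 1) ≠ 0) :
    Real.log p - Real.log 6 ≤ p * (P.height t + P.height s) := by
  have := P.charZero
  have hp₀ : (p : ℝ) ≠ 0 := Nat.cast_ne_zero.2 hp.ne_zero
  have hp₁ : (0 : ℝ) < p := Nat.cast_pos.2 hp.pos
  have hpK : (p : K) ≠ 0 := Nat.cast_ne_zero.2 hp.ne_zero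
  have hunit : Units.mk0 (p : K) hpK ∈ P.O.toSubmonoid.units :=
    ⟨natCast_mem P.O p, by simpa using hinv⟩
  let f := detTerms ((t.1 : K), (t.2 : K)) ((s.1 : K), (s.2 : K))
  have hf : ∑ k, f k = 0 := by
    have hsum := sum_detTerms_pow ((t.1 : K), (t.2 : K)) ((s.1 : K), (s.2 : K)) odd_one
    simp only [pow_one] at hsum
    exact hsum.trans hdet₁
  rw [← sum_detTerms_pow ((t.1 : K), (t.2 : K)) ((s.1 : K), (s.2 : K)) hodd] at hdet
  have hle (i : ι) : P.v i (∑ k, f k ^ p) ≤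
      (P.archFactor (6 / p) * (P.v · p) * (P.localHeight t * P.localHeight s) ^ p) i := by
    have h := map_sum_pow_prime_le hp hf (i := i)
      (mul_nonneg (P.localHeight_pos t i).le (P.localHeight_pos s i).le)
      (map_detTerms_le (P.one_le_localHeight t i) (P.one_le_localHeight s i)
        (P.fst_le_localHeight t i) (P.snd_le_localHeight t i) (P.fst_le_localHeight s i)
        (P.snd_le_localHeight s i))
    simpa using h
  have hmem : ∑ k, f k ^ p ∈ P.O := sum_mem fun k _ => pow_mem
    (detTerms_mem (P.fst_mem ht) (P.snd_mem ht) (P.fst_mem hs) (P.snd_mem hs) k) p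
  have hts (i : ι) : 0 < (P.localHeight t * P.localHeight s) i :=
    mul_pos (P.localHeight_pos t i) (P.localHeight_pos s i)
  have htsp (i : ι) : 0 < ((P.localHeight t * P.localHeight s) ^ p) i := pow_pos (hts i) p
  have hC := P.archFactor_pos (C := 6 / p) (by positivity)
  have hv (i : ι) : 0 < P.v i p := (P.v i).pos hpK
  have hCv (i : ι) : 0 < (P.archFactor (6 / p) * (P.v · p)) i := mul_pos (hC i) (hv i)
  have hlog := (P.logSum_nonneg hmem hdet).trans
    (P.logSum_mono (fun i => (P.v i).pos hdet) hle)
  have hlog_p : P.logSum (P.v · p) = 0 := P.logSum_units hunit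
  rw [P.logSum_mul hCv htsp, P.logSum_mul hC hv, P.logSum_pow,
    P.logSum_mul (P.localHeight_pos t) (P.localHeight_pos s), P.logSum_archFactor, hlog_p,
    Real.log_div (by norm_num) hp₀] at hlog
  change Real.log p - Real.log 6 ≤
    p * (P.logSum (P.localHeight t) + P.logSum (P.localHeight s))
  linarith

theorem card_le_of_height_lt (hp : p.Prime) (hodd : Odd p) (hinv : (p : K)⁻¹ ∈ P.O)
    (hx : x ∈ P.unitPairs) (hx₁ : x ∈ unitLine K) {B : Finset (Kˣ × Kˣ)}
    (hB : ∀ y ∈ B, y ∈ P.unitPairs) (hB₁ : ∀ y ∈ B, y ∈ unitLine K)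
    (hlt : ∀ y ∈ B, 2 * p * P.height (y / x) < Real.log p - Real.log 6) : B.card ≤ p := by
  classical
  have := P.charZero
  have h₁ : (x.1 : K) ≠ 0 := x.1.ne_zero
  have h₂ : (x.2 : K) ≠ 0 := x.2.ne_zero
  have hline {y : Kˣ × Kˣ} (hy : y ∈ B) : (y.1 : K) + y.2 = 1 := hB₁ y hy
  have hxline : (x.1 : K) + x.2 = 1 := hx₁
  rw [← Finset.card_image_of_injOn (injOn_fst_unitLine.mono hB₁)]
  have hdet {y z : Kˣ × Kˣ} (hy : y ∈ B) (hz : z ∈ B) :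
      ((y.1 : K) ^ p / x.1 ^ p - 1) * (z.2 ^ p / x.2 ^ p - 1) -
        (y.2 ^ p / x.2 ^ p - 1) * (z.1 ^ p / x.1 ^ p - 1) = 0 := by
    by_contra hne
    have hle := log_prime_sub_log_six_le hp hodd hinv (div_mem (hB y hy) hx)
      (div_mem (hB z hz) hx) (by
        simp only [Prod.fst_div, Prod.snd_div, Units.val_div_eq_div_val]
        field_simp
        linear_combination (y.1 - x.1 : K) * (hline hz - hxline) -
          (z.1 - x.1 : K) * (hline hy - hxline)) (by simpa [div_pow] using hne)
    linarith [hlt y hy, hlt z hz]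
  by_cases hall : ∀ y ∈ B, (y.1 : K) ^ p = x.1 ^ p
  · refine card_le_of_forall_mul_one_sub_pow_add_eq_zero (l := 0) (m := 1)
      (k := -(x.1 : K) ^ p) hp.two_le (Or.inr one_ne_zero) fun z hz => ?_
    obtain ⟨y, hy, rfl⟩ := Finset.mem_image.1 hz
    simp [hall y hy]
  · push Not at hall
    obtain ⟨y, hy, hne⟩ := hall
    refine card_le_of_forall_mul_one_sub_pow_add_eq_zero
      (l := ((y.1 : K) ^ p / x.1 ^ p - 1) / x.2 ^ p)
      (m := -((y.2 : K) ^ p / x.2 ^ p - 1) / x.1 ^ p)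
      (k := (y.2 : K) ^ p / x.2 ^ p - (y.1 : K) ^ p / x.1 ^ p) hp.two_le (Or.inl ?_) fun w hw => ?_
    · refine div_ne_zero (sub_ne_zero.2 fun h => hne ?_) (pow_ne_zero p h₂)
      rwa [div_eq_one_iff_eq (pow_ne_zero p h₁)] at h
    · obtain ⟨z, hz, rfl⟩ := Finset.mem_image.1 hw
      have hz₂ : 1 - (z.1 : K) = z.2 := by linear_combination -hline hz
      rw [hz₂]
      linear_combination hdet hy hz

end PrimePowers

section LogSpace

/-- The vector whose supremum norm is the hexagonal norm of `(a, b)`, which depends only on the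
differences of `0, a, b` and so measures the point `(1 : exp a : exp b)`. -/
def hexagonVec (a b : ℝ) : Fin 3 → ℝ := ![a, b, a - b]

theorem norm_hexagonVec_le (a b : ℝ) : ‖hexagonVec a b‖ ≤ 3 * max 0 (max a b) - a - b := by
  have h₀ := le_max_left 0 (max a b)
  have h₁ := (le_max_left a b).trans (le_max_right 0 _)
  have h₂ := (le_max_right a b).trans (le_max_right 0 _)
  rw [pi_norm_le_iff_of_nonneg (by linarith)]
  intro k
  rw [Real.norm_eq_abs, abs_le]
  fin_cases k <;> simp only [hexagonVec, Fin.reduceFinMk, Fin.zero_eta, Fin.mk_one,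
    Matrix.cons_val] <;> constructor <;> linarith

theorem three_mul_max_le_norm_hexagonVec (a b : ℝ) :
    3 * max 0 (max a b) ≤ 2 * ‖hexagonVec a b‖ + a + b := by
  have h₀ : |a| ≤ ‖hexagonVec a b‖ := norm_le_pi_norm (hexagonVec a b) 0
  have h₁ : |b| ≤ ‖hexagonVec a b‖ := norm_le_pi_norm (hexagonVec a b) 1
  have h₂ : |a - b| ≤ ‖hexagonVec a b‖ := norm_le_pi_norm (hexagonVec a b) 2
  rw [abs_le] at h₀ h₁ h₂
  rcases max_cases a b with h | h <;> rcases max_cases 0 (max a b) with h' | h' <;> linarith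

/-- The target of the logarithmic embedding of the pairs of units. -/
abbrev LogSpace (ι : Type*) : Type _ := PiLp 1 fun _ : ι => Fin 3 → ℝ

/-- The logarithmic embedding of the pairs of units. -/
noncomputable def logHom : Kˣ × Kˣ →* Multiplicative (LogSpace ι) :=
  MonoidHom.mk' (fun u => Multiplicative.ofAdd (WithLp.toLp 1 fun i =>
    P.w i • hexagonVec (Real.log (P.v i u.1)) (Real.log (P.v i u.2)))) fun u w => by
    have hne (i : ι) (z : Kˣ) : P.v i z ≠ 0 := (P.v i).ne_zero z.ne_zero
    rw [← ofAdd_add]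
    congr 1
    ext i k
    simp only [Prod.fst_mul, Prod.snd_mul, Units.val_mul, map_mul,
      Real.log_mul (hne _ _) (hne _ _), PiLp.add_apply, Pi.add_apply, Pi.smul_apply, smul_eq_mul]
    fin_cases k <;> simp [hexagonVec] <;> ring

/-- The norm of the logarithmic embedding. -/
noncomputable def size (u : Kˣ × Kˣ) : ℝ := ‖(P.logHom u).toAdd‖

theorem size_eq_sum (u : Kˣ × Kˣ) : P.size u =
    ∑ i, P.w i * ‖hexagonVec (Real.log (P.v i u.1)) (Real.log (P.v i u.2))‖ := by
  rw [size, PiLp.norm_eq_of_L1]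
  refine Finset.sum_congr rfl fun i _ => ?_
  simp only [logHom, MonoidHom.mk'_apply, toAdd_ofAdd]
  rw [norm_smul, Real.norm_of_nonneg (P.w_nonneg i)]

theorem height_eq_sum (u : Kˣ × Kˣ) : P.height u =
    ∑ i, P.w i * max 0 (max (Real.log (P.v i u.1)) (Real.log (P.v i u.2))) := by
  simp only [height, logSum, log_localHeight]

theorem norm_logHom_sub (u w : Kˣ × Kˣ) :
    ‖(P.logHom u).toAdd - (P.logHom w).toAdd‖ = P.size (u / w) := by
  rw [size, map_div, toAdd_div]

theorem norm_logHom_sub_smul (u w : Kˣ × Kˣ) (n : ℕ) :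
    ‖(P.logHom u).toAdd - (n : ℝ) • (P.logHom w).toAdd‖ = P.size (u / w ^ n) := by
  rw [Nat.cast_smul_eq_nsmul, ← toAdd_pow, ← map_pow, norm_logHom_sub]

variable {P} {u : Kˣ × Kˣ}

theorem size_le (hu : u ∈ P.unitPairs) : P.size u ≤ 3 * P.height u := by
  have h : P.size u ≤ 3 * P.height u - P.logSum (P.v · u.1) - P.logSum (P.v · u.2) := by
    rw [size_eq_sum, height_eq_sum, logSum, logSum, Finset.mul_sum, ← Finset.sum_sub_distrib,
      ← Finset.sum_sub_distrib]
    refine Finset.sum_le_sum fun i _ => ?_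
    linarith [mul_le_mul_of_nonneg_left (norm_hexagonVec_le (Real.log (P.v i u.1))
      (Real.log (P.v i u.2))) (P.w_nonneg i)]
  rwa [P.logSum_units hu.1, P.logSum_units hu.2, sub_zero, sub_zero] at h

theorem height_le (hu : u ∈ P.unitPairs) : P.height u ≤ 2 / 3 * P.size u := by
  have h : 3 * P.height u ≤ 2 * P.size u + P.logSum (P.v · u.1) + P.logSum (P.v · u.2) := by
    rw [size_eq_sum, height_eq_sum, logSum, logSum, Finset.mul_sum, Finset.mul_sum,
      ← Finset.sum_add_distrib, ← Finset.sum_add_distrib]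
    refine Finset.sum_le_sum fun i _ => ?_
    linarith [mul_le_mul_of_nonneg_left (three_mul_max_le_norm_hexagonVec (Real.log (P.v i u.1))
      (Real.log (P.v i u.2))) (P.w_nonneg i)]
  rw [P.logSum_units hu.1, P.logSum_units hu.2] at h
  linarith

end LogSpace

section Counting

variable {P} {s : Finset (Kˣ × Kˣ)}

-- The radius `9 / 200` makes `2 * 17 * (2 / 3) * (9 / 200) = 1.02` smaller than `log (17 / 6)`.
theorem card_filter_size_lt_le (hinv : (17 : K)⁻¹ ∈ P.O) (hs : ∀ y ∈ s, y ∈ P.unitPairs)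
    (hs₁ : ∀ y ∈ s, y ∈ unitLine K) {x : Kˣ × Kˣ} (hx : x ∈ s) :
    {y ∈ s | P.size (y / x) < 9 / 200}.card ≤ 17 := by
  refine card_le_of_height_lt (p := 17) (by norm_num) (by decide) (by exact_mod_cast hinv)
    (hs x hx) (hs₁ x hx) (fun y hy => hs y (Finset.mem_filter.1 hy).1)
    (fun y hy => hs₁ y (Finset.mem_filter.1 hy).1) fun y hy => ?_
  obtain ⟨hy, hlt⟩ := Finset.mem_filter.1 hy
  have hlog : (1.02 : ℝ) ≤ Real.log 17 - Real.log 6 := by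
    have hexp : Real.exp 1.02 * (1 - 0.02) ≤ Real.exp 1 := by
      rw [show (1 : ℝ) = 1.02 + -0.02 by norm_num, Real.exp_add]
      gcongr
      linarith [Real.add_one_le_exp (-0.02)]
    rw [← Real.log_div (by norm_num) (by norm_num), Real.le_log_iff_exp_le (by norm_num)]
    linarith [Real.exp_one_lt_d9]
  push_cast
  linarith [height_le (div_mem (hs y hy) (hs x hx))]

theorem hasGapPrinciples (hs : ∀ y ∈ s, y ∈ P.unitPairs) (hs₁ : ∀ y ∈ s, y ∈ unitLine K) :
    HasGapPrinciples s fun y => (P.logHom y).toAdd where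
  gap x hx y hy hxy := by
    rw [norm_logHom_sub]
    change P.size x ≤ _
    linarith [height_le_of_ne (hs x hx) (hs y hy) (hs₁ x hx) (hs₁ y hy) hxy,
      size_le (hs x hx), height_le (div_mem (hs y hy) (hs x hx))]
  pade x hx y hy n hn := by
    rw [show (2 * n : ℝ) = ((2 * n : ℕ) : ℝ) by push_cast; rfl, norm_logHom_sub_smul]
    change n * P.size x ≤ _
    have hsize : (n : ℝ) * P.size x ≤ n * (3 * P.height x) := by gcongr; exact size_le (hs x hx)
    linarith [mul_height_le (hs x hx) (hs y hy) (hs₁ x hx) (hs₁ y hy) hn,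
      height_le (div_mem (hs y hy) (pow_mem (hs x hx) (2 * n)))]

theorem card_le (hinv : (17 : K)⁻¹ ∈ P.O) (hs : ∀ y ∈ s, y ∈ P.unitPairs)
    (hs₁ : ∀ y ∈ s, y ∈ unitLine K) {W : Submodule ℝ (LogSpace ι)}
    (hW : ∀ y ∈ s, (P.logHom y).toAdd ∈ W) : s.card ≤ 2 ^ (8 * (Module.finrank ℝ W + 1)) := by
  have hgap := hasGapPrinciples hs hs₁
  let f : s → W := fun y => ⟨(P.logHom y).toAdd, hW y y.2⟩
  have hf : HasGapPrinciples s.attach f :=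
    ⟨fun x _ y _ hxy => hgap.gap x x.2 y y.2 (Subtype.coe_ne_coe.2 hxy),
      fun x _ y _ => hgap.pade x x.2 y y.2⟩
  rw [← s.card_attach]
  refine hf.card_le fun x _ => ?_
  rw [← Finset.card_map (Function.Embedding.subtype _)]
  refine (Finset.card_le_card fun z hz => ?_).trans (card_filter_size_lt_le hinv hs hs₁ x.2)
  obtain ⟨y, hy, rfl⟩ := Finset.mem_map.1 hz
  refine Finset.mem_filter.2 ⟨y.2, (P.norm_logHom_sub y x).symm.trans_lt ?_⟩
  exact (Finset.mem_filter.1 hy).2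

end Counting

end PlaceSystem

section NumberField

open NumberField

variable {K : Type*} [Field K] [NumberField K]

/-- The elements of a number field that are integral outside a finite set of finite places. -/
def integersOutside (S : Finset (FinitePlace K)) : Subring K where
  carrier := {z | ∀ w ∉ S, w z ≤ 1}
  mul_mem' {a b} ha hb w hw := by
    rw [map_mul]
    exact mul_le_one₀ (ha w hw) (apply_nonneg w b) (hb w hw)
  one_mem' w _ := (map_one w).le
  add_mem' {a b} ha hb w hw := (FinitePlace.add_le w a b).trans (max_le (ha w hw) (hb w hw))
  zero_mem' w _ := by rw [map_zero]; exact zero_le_one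
  neg_mem' {a} ha w hw := by rw [map_neg_eq_map]; exact ha w hw

variable {S : Finset (FinitePlace K)}

theorem inv_mem_integersOutside {z : K} (hz : ∀ w ∉ S, w z = 1) : z⁻¹ ∈ integersOutside S :=
  fun w hw => by rw [map_inv₀, hz w hw, inv_one]

theorem mem_units_integersOutside {z : Kˣ} (hz : ∀ w ∉ S, w (z : K) = 1) :
    z ∈ (integersOutside S).toSubmonoid.units :=
  ⟨fun w hw => (hz w hw).le, fun w hw => by
    simpa using inv_mem_integersOutside hz w hw⟩

theorem one_le_prod_of_mem_integersOutside {D : K} (hD : D ∈ integersOutside S) (hD₀ : D ≠ 0) :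
    1 ≤ (∏ v : InfinitePlace K, v D ^ v.mult) * ∏ w ∈ S, w D := by
  classical
  rw [← prod_abs_eq_one hD₀]
  have hfin := FinitePlace.hasFiniteMulSupport hD₀
  rw [finprod_eq_prod_of_mulSupport_subset (s := S ∪ hfin.toFinset) _
    fun w hw => Finset.mem_coe.2 (Finset.mem_union_right _ (hfin.mem_toFinset.2 hw))]
  refine mul_le_mul_of_nonneg_left ?_
    (Finset.prod_nonneg fun v _ => pow_nonneg (apply_nonneg v D) _)
  rw [← Finset.prod_sdiff (Finset.subset_union_left (s₁ := S) (s₂ := hfin.toFinset))]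
  refine mul_le_of_le_one_left (Finset.prod_nonneg fun w _ => apply_nonneg w D) ?_
  exact Finset.prod_le_one (fun w _ => apply_nonneg w D) fun w hw =>
    hD w (Finset.mem_sdiff.1 hw).2

theorem sum_log_nonneg_of_mem_integersOutside {D : K} (hD : D ∈ integersOutside S) (hD₀ : D ≠ 0) :
    0 ≤ ∑ v : InfinitePlace K, v.mult * Real.log (v D) + ∑ w ∈ S, Real.log (w D) := by
  have hv (v : InfinitePlace K) : v D ≠ 0 := by simpa using hD₀
  have hw (w : FinitePlace K) : w D ≠ 0 := (FinitePlace.pos_iff.2 hD₀).ne'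
  have h := Real.log_nonneg (one_le_prod_of_mem_integersOutside hD hD₀)
  rw [Real.log_mul (Finset.prod_ne_zero_iff.2 fun v _ => pow_ne_zero _ (hv v))
    (Finset.prod_ne_zero_iff.2 fun w _ => hw w), Real.log_prod fun v _ => pow_ne_zero _ (hv v),
    Real.log_prod fun w _ => hw w] at h
  simpa only [Real.log_pow] using h

/-- The place system formed by the infinite places of a number field and finitely many finite
places, with weights relative to the degree of the field. -/
noncomputable def PlaceSystem.ofFinitePlaces (S : Finset (FinitePlace K)) :
    PlaceSystem K (InfinitePlace K ⊕ S) where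
  v := Sum.elim (fun v => v.1) (fun w => w.1.1)
  w := Sum.elim (fun v => v.mult / Module.finrank ℚ K) (fun _ => 1 / Module.finrank ℚ K)
  arch := Finset.univ.disjSum ∅
  O := integersOutside S
  w_nonneg := by rintro (v | w) <;> simp only [Sum.elim_inl, Sum.elim_inr] <;> positivity
  sum_arch := by
    rw [Finset.sum_disjSum, Finset.sum_empty, add_zero]
    simp only [Sum.elim_inl]
    rw [← Finset.sum_div, ← Nat.cast_sum, InfinitePlace.sum_mult_eq,
      div_self (Nat.cast_ne_zero.2 Module.finrank_pos.ne')]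
  arch_natCast := by
    rintro (v | w) h n
    · change v (n : K) = n
      rw [← InfinitePlace.norm_embedding_eq, map_natCast, Complex.norm_natCast]
    · simp at h
  nonarch := by
    rintro (v | w) h
    · simp at h
    · exact FinitePlace.add_le w.1
  sum_log_nonneg D hD hD₀ := by
    have h := div_nonneg (sum_log_nonneg_of_mem_integersOutside hD hD₀)
      (Nat.cast_nonneg (α := ℝ) (Module.finrank ℚ K))
    rw [add_div, Finset.sum_div, Finset.sum_div, ← Finset.sum_coe_sort S] at h
    rw [Fintype.sum_sum_type]
    simp only [Sum.elim_inl, Sum.elim_inr, div_mul_eq_mul_div, one_mul]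
    exact h

theorem finite_setOf_finitePlace_ne_one (T : Finset Kˣ) :
    {w : FinitePlace K | ∃ z ∈ T, w (z : K) ≠ 1}.Finite := by
  refine (T.finite_toSet.biUnion fun z _ =>
    FinitePlace.hasFiniteMulSupport z.ne_zero).subset fun w ⟨z, hz, hw⟩ => ?_
  exact Set.mem_biUnion hz hw

end NumberField

section Rank

theorem toAdd_map_mem_span_of_pow_mem_closure (𝕜 : Type*) {G E : Type*} [Group G] [DivisionRing 𝕜]
    [CharZero 𝕜] [AddCommGroup E] [Module 𝕜 E] (φ : G →* Multiplicative E) {T : Set G} {y : G}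
    {m : ℕ} (hm : m ≠ 0) (hy : y ^ m ∈ Subgroup.closure T) :
    (φ y).toAdd ∈ Submodule.span 𝕜 ((fun x => (φ x).toAdd) '' T) := by
  set W := Submodule.span 𝕜 ((fun x => (φ x).toAdd) '' T)
  have hle : Subgroup.closure T ≤ (AddSubgroup.toSubgroup W.toAddSubgroup).comap φ := by
    rw [Subgroup.closure_le]
    exact fun x hx => Submodule.subset_span (Set.mem_image_of_mem _ hx)
  have h : (φ (y ^ m)).toAdd ∈ W := hle hy
  rw [map_pow, toAdd_pow, ← Nat.cast_smul_eq_nsmul 𝕜] at h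
  exact (W.smul_mem_iff (Nat.cast_ne_zero.2 hm)).1 h

theorem PlaceSystem.card_le_of_pow_mem_closure {K ι : Type*} [Field K] [Fintype ι]
    (P : PlaceSystem K ι) (hinv : (17 : K)⁻¹ ∈ P.O) {r : ℕ} (g : Fin r → Kˣ × Kˣ)
    {s : Finset (Kˣ × Kˣ)} (hs : ∀ y ∈ s, y ∈ P.unitPairs) (hs₁ : ∀ y ∈ s, y ∈ unitLine K)
    (hg : ∀ y ∈ s, ∃ m : ℕ, 0 < m ∧ y ^ m ∈ Subgroup.closure (Set.range g)) :
    s.card ≤ 2 ^ (8 * (r + 1)) := by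
  let b : Fin r → LogSpace ι := fun i => (P.logHom (g i)).toAdd
  have hspan : ∀ y ∈ s, (P.logHom y).toAdd ∈ Submodule.span ℝ (Set.range b) := fun y hy => by
    obtain ⟨m, hm, hym⟩ := hg y hy
    have h := toAdd_map_mem_span_of_pow_mem_closure ℝ P.logHom hm.ne' hym
    rwa [← Set.range_comp] at h
  have hrank : Module.finrank ℝ (Submodule.span ℝ (Set.range b)) ≤ r :=
    (finrank_range_le_card b).trans_eq (Fintype.card_fin r)
  refine (card_le hinv hs hs₁ hspan).trans ?_
  gcongr
  exact one_le_two

theorem card_le_of_numberField {K : Type*} [Field K] [NumberField K] {r : ℕ}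
    (g : Fin r → Kˣ × Kˣ) {s : Finset (Kˣ × Kˣ)} (hs : ∀ y ∈ s, y ∈ unitLine K)
    (hg : ∀ y ∈ s, ∃ m : ℕ, 0 < m ∧ y ^ m ∈ Subgroup.closure (Set.range g)) :
    s.card ≤ 2 ^ (8 * (r + 1)) := by
  classical
  let T : Finset Kˣ := insert (Units.mk0 17 (by norm_num)) (s.image Prod.fst ∪ s.image Prod.snd)
  have hT := finite_setOf_finitePlace_ne_one T
  have hone {z : Kˣ} (hz : z ∈ T) : ∀ w ∉ hT.toFinset, w (z : K) = 1 := fun w hw => by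
    by_contra hne
    exact hw (hT.mem_toFinset.2 ⟨z, hz, hne⟩)
  have hfst {y : Kˣ × Kˣ} (hy : y ∈ s) : y.1 ∈ T := Finset.mem_insert_of_mem
    (Finset.mem_union_left _ (Finset.mem_image_of_mem _ hy))
  have hsnd {y : Kˣ × Kˣ} (hy : y ∈ s) : y.2 ∈ T := Finset.mem_insert_of_mem
    (Finset.mem_union_right _ (Finset.mem_image_of_mem _ hy))
  exact (PlaceSystem.ofFinitePlaces hT.toFinset).card_le_of_pow_mem_closure
    (inv_mem_integersOutside (hone (Finset.mem_insert_self _ _))) g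
    (fun y hy => ⟨mem_units_integersOutside (hone (hfst hy)),
      mem_units_integersOutside (hone (hsnd hy))⟩) hs hg

end Rank

section Specialization

/-- The map on pairs of units induced by a ring homomorphism. -/
def mapUnitPairs {R R' : Type*} [CommRing R] [CommRing R'] (f : R →+* R') :
    Rˣ × Rˣ →* R'ˣ × R'ˣ :=
  (Units.map (f : R →* R')).prodMap (Units.map (f : R →* R'))

section Map

variable {R R' : Type*} [CommRing R] [CommRing R'] (f : R →+* R')

variable {f} in
theorem mapUnitPairs_injective (hf : Function.Injective f) :
    Function.Injective (mapUnitPairs f) :=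
  (Units.map_injective hf).prodMap (Units.map_injective hf)

theorem mapUnitPairs_mem_unitLine {y : Rˣ × Rˣ} (hy : y ∈ unitLine R) :
    mapUnitPairs f y ∈ unitLine R' := by
  change f y.1 + f y.2 = 1
  rw [← map_add, show (y.1 : R) + y.2 = 1 from hy, map_one]

variable {f} in
theorem mapUnitPairs_mem_unitLine_iff (hf : Function.Injective f) {y : Rˣ × Rˣ} :
    mapUnitPairs f y ∈ unitLine R' ↔ y ∈ unitLine R := by
  refine ⟨fun h => hf ?_, mapUnitPairs_mem_unitLine f⟩
  rw [map_add, map_one]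
  exact h

theorem injOn_mapUnitPairs [Nontrivial R'] {s : Set (Rˣ × Rˣ)}
    (hdiff : ∀ y ∈ s, ∀ z ∈ s, y ≠ z → IsUnit ((y.1 : R) - z.1)) :
    Set.InjOn (mapUnitPairs f) s := by
  intro y hy z hz hyz
  by_contra hne
  refine ((hdiff y hy z hz hne).map f).ne_zero ?_
  rw [map_sub, sub_eq_zero]
  exact congrArg (fun x => (x.1 : R')) hyz

end Map

theorem card_le_of_ringHom_numberField {A K : Type*} [CommRing A] [Field K] [NumberField K]
    (φ : A →+* K) {r : ℕ} (g : Fin r → Aˣ × Aˣ) {s : Finset (Aˣ × Aˣ)}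
    (hs : ∀ y ∈ s, y ∈ unitLine A)
    (hdiff : ∀ y ∈ s, ∀ z ∈ s, y ≠ z → IsUnit ((y.1 : A) - z.1))
    (hg : ∀ y ∈ s, ∃ m : ℕ, 0 < m ∧ y ^ m ∈ Subgroup.closure (Set.range g)) :
    s.card ≤ 2 ^ (8 * (r + 1)) := by
  classical
  rw [← Finset.card_image_of_injOn (injOn_mapUnitPairs φ hdiff)]
  refine card_le_of_numberField (mapUnitPairs φ ∘ g)
    (Finset.forall_mem_image.2 fun y hy => mapUnitPairs_mem_unitLine φ (hs y hy))
    (Finset.forall_mem_image.2 fun y hy => ?_)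
  obtain ⟨m, hm, hym⟩ := hg y hy
  refine ⟨m, hm, ?_⟩
  rw [Set.range_comp, ← MonoidHom.map_closure, ← map_pow]
  exact Subgroup.mem_map_of_mem _ hym

-- By Zariski's lemma, the residue field of a maximal ideal is finite over `ℚ`.
theorem exists_ringHom_numberField.{u} (A : Type u) [CommRing A] [Nontrivial A] [Algebra ℚ A]
    [Algebra.FiniteType ℚ A] :
    ∃ (K : Type u) (_ : Field K) (_ : NumberField K), Nonempty (A →+* K) := by
  obtain ⟨m, hm⟩ := Ideal.exists_maximal A
  let _ : Field (A ⧸ m) := Ideal.Quotient.field m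
  have hft : Algebra.FiniteType ℚ (A ⧸ m) := Algebra.FiniteType.of_surjective
    (Ideal.Quotient.mkₐ ℚ m) (Ideal.Quotient.mkₐ_surjective ℚ m)
  have hfin : Module.Finite ℚ (A ⧸ m) := finite_of_finite_type_of_isJacobsonRing ℚ (A ⧸ m)
  have hchar : CharZero (A ⧸ m) :=
    charZero_of_injective_algebraMap (algebraMap ℚ (A ⧸ m)).injective
  have hnf : NumberField (A ⧸ m) :=
    { to_charZero := hchar
      to_finiteDimensional := by
        convert hfin
        exact Subsingleton.elim _ _ }
  exact ⟨A ⧸ m, inferInstance, hnf, ⟨Ideal.Quotient.mk m⟩⟩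

variable {F : Type*} [Field F]

theorem exists_fg_subalgebra_forall_exists_unit (k : Type*) [Field k] [Algebra k F]
    (T : Finset F) :
    ∃ A : Subalgebra k F, A.FG ∧ ∀ t ∈ T, t ≠ 0 → ∃ u : Aˣ, ((u : A) : F) = t := by
  classical
  refine ⟨Algebra.adjoin k ((T ∪ T.image (·⁻¹) : Finset F) : Set F),
    Subalgebra.fg_adjoin_finset _, fun t ht ht₀ => ?_⟩
  have hmem : t ∈ Algebra.adjoin k ((T ∪ T.image (·⁻¹) : Finset F) : Set F) :=
    Algebra.subset_adjoin (by simp [ht])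
  have hinv : t⁻¹ ∈ Algebra.adjoin k ((T ∪ T.image (·⁻¹) : Finset F) : Set F) :=
    Algebra.subset_adjoin (by simp [ht])
  exact ⟨⟨⟨t, hmem⟩, ⟨t⁻¹, hinv⟩, Subtype.ext (mul_inv_cancel₀ ht₀),
    Subtype.ext (inv_mul_cancel₀ ht₀)⟩, rfl⟩

theorem card_le_of_pow_mem_closure [CharZero F] {r : ℕ} (g : Fin r → Fˣ × Fˣ)
    {s : Finset (Fˣ × Fˣ)} (hs : ∀ y ∈ s, y ∈ unitLine F)
    (hg : ∀ y ∈ s, ∃ m : ℕ, 0 < m ∧ y ^ m ∈ Subgroup.closure (Set.range g)) :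
    s.card ≤ 2 ^ (8 * (r + 1)) := by
  classical
  let B : Finset (Fˣ × Fˣ) := s ∪ Finset.univ.image g
  let T : Finset F := B.image (fun y => (y.1 : F)) ∪ B.image (fun y => (y.2 : F)) ∪
    Finset.image₂ (fun y z => (y.1 : F) - z.1) s s
  obtain ⟨A, hA, hT⟩ := exists_fg_subalgebra_forall_exists_unit ℚ T
  have hA' : Algebra.FiniteType ℚ A := A.fg_iff_finiteType.1 hA
  obtain ⟨K, _, _, ⟨φ⟩⟩ := exists_ringHom_numberField A
  let j : A →+* F := A.val
  have hj : Function.Injective j := Subtype.val_injective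
  have hlift {y : Fˣ × Fˣ} (hy : y ∈ B) : y ∈ Set.range (mapUnitPairs j) := by
    obtain ⟨u₁, hu₁⟩ := hT y.1 (by grind) y.1.ne_zero
    obtain ⟨u₂, hu₂⟩ := hT y.2 (by grind) y.2.ne_zero
    exact ⟨(u₁, u₂), Prod.ext (Units.ext hu₁) (Units.ext hu₂)⟩
  choose g' hg' using fun i => hlift (y := g i) (by grind)
  obtain ⟨s', -, rfl⟩ := Finset.subset_set_image_iff.1
    (show (s : Set (Fˣ × Fˣ)) ⊆ mapUnitPairs j '' Set.univ by
      rw [Set.image_univ]; exact fun y hy => hlift (Finset.mem_union_left _ hy))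
  obtain rfl : mapUnitPairs j ∘ g' = g := funext hg'
  rw [Set.range_comp, ← MonoidHom.map_closure] at hg
  simp only [Finset.forall_mem_image, mapUnitPairs_mem_unitLine_iff hj, ← map_pow,
    Subgroup.mem_map_iff_mem (mapUnitPairs_injective hj)] at hs hg
  rw [Finset.card_image_of_injective _ (mapUnitPairs_injective hj)]
  refine card_le_of_ringHom_numberField φ g' @hs (fun y hy z hz hyz => ?_) @hg
  have hne : (y.1 : A) - z.1 ≠ 0 := fun h =>
    hyz (injOn_fst_unitLine (hs hy) (hs hz) (sub_eq_zero.1 h))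
  obtain ⟨u, hu⟩ := hT ((y.1 - z.1 : A) : F) (Finset.mem_union_right _ (Finset.mem_image₂_of_mem
    (Finset.mem_image_of_mem _ hy) (Finset.mem_image_of_mem _ hz))) fun h => hne (hj h)
  exact ⟨u, hj hu⟩

end Specialization

theorem exists_closure_range_eq_of_mulEquiv {G ι : Type*} [CommGroup G] [Finite ι]
    {H : Subgroup G} (e : H ≃* Multiplicative (ι → ℤ)) :
    ∃ g : ι → G, Subgroup.closure (Set.range g) = H := by
  classical
  have := Fintype.ofFinite ι
  let b : ι → H := fun i => e.symm (Multiplicative.ofAdd (Pi.single i 1))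
  refine ⟨fun i => b i, le_antisymm ((Subgroup.closure_le _).2 ?_) fun x hx => ?_⟩
  · rintro _ ⟨i, rfl⟩
    exact (b i).2
  · have hsum (k : ι → ℤ) :
        Multiplicative.ofAdd k = ∏ i, Multiplicative.ofAdd (Pi.single i (1 : ℤ)) ^ k i := by
      apply Multiplicative.toAdd.injective
      ext j
      simp [toAdd_prod, toAdd_zpow, Finset.sum_apply, Pi.single_apply]
    have hx' : (⟨x, hx⟩ : H) = ∏ i, b i ^ (e ⟨x, hx⟩).toAdd i := by
      apply e.injective
      simpa [b] using hsum (e ⟨x, hx⟩).toAdd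
    rw [show x = ((⟨x, hx⟩ : H) : G) from rfl, hx', Subgroup.val_finsetProd]
    exact Subgroup.prod_mem _ fun i _ => by
      simpa using Subgroup.zpow_mem _ (Subgroup.subset_closure (Set.mem_range_self i)) _

theorem beukers_schlickewei_general {F : Type*} [Field F] [CharZero F] {r : ℕ}
    (Γ : Set (Fˣ × Fˣ)) (g : Fin r → Fˣ × Fˣ)
    (hpow : ∀ x ∈ Γ, ∃ m : ℕ, 0 < m ∧ x ^ m ∈ Subgroup.closure (Set.range g)) :
    (Γ ∩ unitLine F).Finite ∧ (Γ ∩ unitLine F).ncard ≤ 2 ^ (8 * (r + 1)) := by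
  have hcard (s : Finset (Fˣ × Fˣ)) (hs : ↑s ⊆ Γ ∩ unitLine F) : s.card ≤ 2 ^ (8 * (r + 1)) :=
    card_le_of_pow_mem_closure g (fun y hy => (hs hy).2) fun y hy => hpow y (hs hy).1
  have hfin : (Γ ∩ unitLine F).Finite := by
    by_contra hinf
    obtain ⟨s, hs, hs_card⟩ :=
      Set.Infinite.exists_subset_card_eq hinf (2 ^ (8 * (r + 1)) + 1)
    exact absurd (hcard s hs) (by omega)
  refine ⟨hfin, ?_⟩
  rw [Set.ncard_eq_toFinset_card _ hfin]
  exact hcard _ hfin.coe_toFinset.subset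

/-- Theorem of Beukers and Schlickewei: if `Γ ≤ (ℂ*)²` has finite rank `r` (it contains a
free subgroup `Γ₀` of rank `r` such that every element of `Γ` has a positive power in `Γ₀`),
then the equation `x + y = 1` has finitely many solutions in `Γ`, at most `2^(8(r+1))`. -/
theorem beukers_schlickewei (Γ : Subgroup (ℂˣ × ℂˣ)) (r : ℕ)
    (Γ₀ : Subgroup (ℂˣ × ℂˣ)) (hle : Γ₀ ≤ Γ)
    (hfree : Nonempty (Γ₀ ≃* Multiplicative (Fin r → ℤ)))
    (hpow : ∀ x ∈ Γ, ∃ m : ℕ, 0 < m ∧ x ^ m ∈ Γ₀) :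
    ({p : ℂˣ × ℂˣ | p ∈ Γ} ∩ {p : ℂˣ × ℂˣ | (p.1 : ℂ) + (p.2 : ℂ) = 1}).Finite ∧
    ({p : ℂˣ × ℂˣ | p ∈ Γ} ∩ {p : ℂˣ × ℂˣ | (p.1 : ℂ) + (p.2 : ℂ) = 1}).ncard
      ≤ 2 ^ (8 * (r + 1)) := by
  obtain ⟨g, rfl⟩ := exists_closure_range_eq_of_mulEquiv hfree.some
  exact beukers_schlickewei_general Γ g hpow
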